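/- arXiv:1911.10634 — 2 statements merged into one kernel-verified Lean document; each statement's English description precedes it below -/
import Mathlib

section
/- For every prime p > 3, the sum Σ_{n=1}^{⌊p/3⌋} (n/p) is nonnegative. -/
open Polynomial

noncomputable def thetaOp (R : Type*) [CommRing R] : R[X] →ₗ[R] R[X] :=
  (LinearMap.mulLeft R (X : R[X])).comp derivative

lemma thetaOp_apply {R : Type*} [CommRing R] (f : R[X]) :
    thetaOp R f = X * derivative f := rfl

lemma thetaOp_pow_X_pow {R : Type*} [CommRing R] (m a : ℕ) :
    (thetaOp R ^ m) (X ^ a) = C ((a : R) ^ m) * X ^ a := by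
  induction m with
  | zero => simp
  | succ m ih =>
    rw [pow_succ', Module.End.mul_apply, ih, thetaOp_apply]
    rcases a with _ | a
    · rcases m with _ | m <;> simp
    · simp only [derivative_C_mul, derivative_X_pow, Nat.add_sub_cancel]
      rw [pow_succ (_ : R) m, C_mul]
      ring

lemma thetaOp_pow_dvd {R : Type*} [CommRing R] (m n : ℕ) (f : R[X])
    (h : (X - 1) ^ (m + n) ∣ f) : (X - 1) ^ n ∣ (thetaOp R ^ m) f := by
  induction m generalizing f with
  | zero => simpa using h
  | succ m ih =>
    rw [pow_succ, Module.End.mul_apply]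
    apply ih
    obtain ⟨q, rfl⟩ := h
    rw [thetaOp_apply, show m + 1 + n = (m + n) + 1 by ring, derivative_mul, derivative_pow]
    simp only [Nat.add_sub_cancel, derivative_sub, derivative_X, derivative_one]
    refine ⟨X * (C ((m + n + 1 : ℕ) : R) * q + (X - 1) * derivative q), ?_⟩
    ring

lemma thetaOp_pow_eval {R : Type*} [CommRing R] (m : ℕ) (q : R[X]) :
    ((thetaOp R ^ m) ((X - 1) ^ m * q)).eval 1 = (m.factorial : R) * q.eval 1 := by
  induction m generalizing q with
  | zero => simp
  | succ m ih =>
    rw [pow_succ, Module.End.mul_apply]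
    have : thetaOp R ((X - 1) ^ (m + 1) * q) =
        (X - 1) ^ m * (X * (C ((m + 1 : ℕ) : R) * q + (X - 1) * derivative q)) := by
      rw [thetaOp_apply, derivative_mul, derivative_pow]
      simp only [Nat.add_sub_cancel, derivative_sub, derivative_X, derivative_one]
      ring
    rw [this, ih, Nat.factorial_succ]
    simp
    ring

lemma half_factorial_sq (p m : ℕ) [Fact p.Prime] (hm : p = 2 * m + 1) :
    ((m.factorial : ZMod p)) ^ 2 * (-1) ^ m = -1 := by
  have hw := ZMod.wilsons_lemma p
  have hpm : p - 1 = m + m := by omega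
  rw [hpm, ← Finset.prod_range_add_one_eq_factorial, Finset.prod_range_add] at hw
  refine Eq.trans ?_ hw
  rw [← Finset.prod_range_add_one_eq_factorial]
  push_cast
  rw [sq, mul_assoc]
  congr 1
  rw [← Finset.prod_range_reflect (fun x => ((m : ZMod p) + x + 1))]
  rw [← Finset.card_range m, ← Finset.prod_const, Finset.card_range, ← Finset.prod_mul_distrib]
  apply Finset.prod_congr rfl
  intro k hk
  have hk := Finset.mem_range.mp hk
  have h0 : ((2 * m + 1 : ℕ) : ZMod p) = 0 := by rw [← hm]; simp
  have h1 : m - 1 - k = m - (k + 1) := by omega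
  rw [h1, Nat.cast_sub (by omega)]
  push_cast at h0 ⊢
  linear_combination (-1 : ZMod p) * h0

lemma sub_pow_factor {R : Type*} [CommRing R] (a b : ℕ) :
    ∃ q : R[X], (X ^ a - X ^ b : R[X]) = (X - 1) * q ∧ q.eval 1 = (a : R) - b := by
  refine ⟨(∑ i ∈ Finset.range a, X ^ i) - ∑ i ∈ Finset.range b, X ^ i, ?_, ?_⟩
  · rw [mul_sub, mul_geom_sum, mul_geom_sum]; ring
  · simp [eval_finsetSum]

/-- The characteristic `p` part of the determination of the sign. -/
lemma sign_of_gauss (p m h : ℕ) [Fact p.Prime] (hm : p = 2 * m + 1) (hmpos : 0 < m)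
    (hh : 2 * h = p + 1) (ε : ℤ) (hε : ε = 1 ∨ ε = -1) (ζ : ℂ) (hζ : IsPrimitiveRoot ζ p)
    (hg : ∑ a ∈ Finset.range p, (legendreSym p a : ℂ) * ζ ^ a =
      ε * ∏ k ∈ Finset.range m, (ζ ^ ((k + 1) * h) - ζ ^ ((k + 1) * h * (p - 1)))) :
    ε = (-1) ^ m := by
  have hp := (Fact.out : p.Prime)
  set F : ℤ[X] := (∑ a ∈ Finset.range p, C (legendreSym p a) * X ^ a) -
      C ε * ∏ k ∈ Finset.range m, (X ^ ((k + 1) * h) - X ^ ((k + 1) * h * (p - 1))) with hF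
  have h1 : aeval ζ F = 0 := by
    simp [hF, map_sum, map_prod, hg]
  have h2 : cyclotomic p ℤ ∣ F := by
    rw [cyclotomic_eq_minpoly hζ hp.pos]
    exact minpoly.isIntegrallyClosed_dvd (hζ.isIntegral hp.pos) h1
  have h3 : cyclotomic p (ZMod p) = (X - 1) ^ (p - 1) := by
    have := cyclotomic_prime_mul_X_sub_one (ZMod p) p
    have hx : (X - 1 : (ZMod p)[X]) ≠ 0 := X_sub_C_ne_zero 1
    apply mul_right_cancel₀ hx
    rw [this, ← pow_succ, Nat.sub_add_cancel hp.pos, sub_pow_char, one_pow]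
  have h4 : (X - 1) ^ (m + 1) ∣ F.map (Int.castRingHom (ZMod p)) := by
    have := Polynomial.map_dvd (Int.castRingHom (ZMod p)) h2
    rw [map_cyclotomic, h3] at this
    exact (pow_dvd_pow _ (by omega)).trans this
  have h5 := thetaOp_pow_dvd m 1 _ h4
  have h6 : ((thetaOp (ZMod p) ^ m) (F.map (Int.castRingHom (ZMod p)))).eval 1 = 0 := by
    obtain ⟨q, hq⟩ := h5
    rw [hq]; simp
  choose q hq1 hq2 using fun k : ℕ => sub_pow_factor (R := ZMod p) ((k + 1) * h) ((k + 1) * h * (p - 1))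
  have hq3 : ∀ k, (q k).eval 1 = ((k + 1 : ℕ) : ZMod p) := by
    intro k
    rw [hq2]
    have e1 : ((2 * h : ℕ) : ZMod p) = 1 := by rw [hh]; simp
    push_cast [Nat.cast_sub hp.one_le] at e1 ⊢
    simp only [CharP.cast_eq_zero]
    linear_combination ((k : ZMod p) + 1) * e1
  have h7 : F.map (Int.castRingHom (ZMod p)) =
      (∑ a ∈ Finset.range p, (((legendreSym p a : ℤ)) : ZMod p) • X ^ a) -
      (ε : ZMod p) • ((X - 1) ^ m * ∏ k ∈ Finset.range m, q k) := by
    simp only [hF, Polynomial.map_sub, Polynomial.map_sum, Polynomial.map_mul, Polynomial.map_prod, Polynomial.map_pow, map_X, map_C, smul_eq_C_mul, hq1, Finset.prod_mul_distrib]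
    simp
  rw [h7, map_sub, map_sum, map_smul] at h6
  simp only [map_smul, thetaOp_pow_X_pow, eval_sub, eval_finsetSum, eval_smul, thetaOp_pow_eval] at h6
  simp only [eval_prod, hq3] at h6
  rw [← Nat.cast_prod, Finset.prod_range_add_one_eq_factorial] at h6
  have h8 : ∑ a ∈ Finset.range p, ((legendreSym p a : ℤ) : ZMod p) • eval (1 : ZMod p) (C ((a : ZMod p) ^ m) * X ^ a) = -1 := by
    have hpm : p / 2 = m := by omega
    have : ∀ a ∈ Finset.range p, ((legendreSym p a : ℤ) : ZMod p) • eval (1 : ZMod p) (C ((a : ZMod p) ^ m) * X ^ a) = if a = 0 then 0 else 1 := by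
      intro a ha
      have ha := Finset.mem_range.mp ha
      rw [legendreSym.eq_pow, hpm]
      split_ifs with h0
      · subst h0; simp [hmpos.ne']
      · have : (a : ZMod p) ≠ 0 := by
          rw [Ne, ZMod.natCast_eq_zero_iff]
          exact Nat.not_dvd_of_pos_of_lt (by omega) ha
        simp
        rw [← pow_add, ← two_mul, show 2 * m = p - 1 by omega, ZMod.pow_card_sub_one_eq_one this]
    have hr : Finset.range p = Finset.range (2 * m + 1) := by rw [← hm]
    rw [Finset.sum_congr rfl this, hr, Finset.sum_range_succ']
    simp
    have h0 : ((2 * m + 1 : ℕ) : ZMod p) = 0 := by rw [← hm]; simp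
    push_cast at h0
    linear_combination h0
  rw [h8] at h6
  have h9 := half_factorial_sq p m hm
  have h10 : ((ε : ℤ) : ZMod p) = ((-1) ^ m : ℤ) := by
    have e2 : ((-1 : ZMod p) ^ m) ^ 2 = 1 := by rw [← pow_mul, mul_comm, pow_mul]; simp
    push_cast
    simp only [smul_eq_mul] at h6
    have e3 : (ε : ZMod p) ^ 2 = 1 := by rcases hε with rfl | rfl <;> simp
    linear_combination (ε : ZMod p) * h9 + (-1 : ZMod p) ^ m * h6
  have h11 : (2 : ZMod p) ≠ 0 := by
    have : ((2 : ℕ) : ZMod p) ≠ 0 := by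
      rw [Ne, ZMod.natCast_eq_zero_iff]
      exact Nat.not_dvd_of_pos_of_lt (by omega) (by omega)
    exact_mod_cast this
  rcases hε with rfl | rfl <;> rcases neg_one_pow_eq_or ℤ m with h | h <;> rw [h] at h10 ⊢ <;> exfalso <;> apply h11 <;> push_cast at h10
  · linear_combination h10
  · linear_combination -h10
open Filter Topology

lemma tail_bound (a b : ℕ → ℝ) (C : ℝ) (ha : ∀ n, |∑ i ∈ Finset.range n, a i| ≤ C)
    (hb : Antitone b) (hb0 : ∀ n, 0 ≤ b n) (N k : ℕ) :
    |∑ i ∈ Finset.range (N + k), a i * b i - ∑ i ∈ Finset.range N, a i * b i| ≤ 2 * C * b N := by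
  set S : ℕ → ℝ := fun k => ∑ i ∈ Finset.range (N + k), a i - ∑ i ∈ Finset.range N, a i with hS
  have hSb : ∀ k, |S k| ≤ 2 * C := by
    intro k
    have h1 := abs_le.mp (ha (N + k)); have h2 := abs_le.mp (ha N)
    rw [abs_le]; simp only [hS]; constructor <;> linarith
  have key : |∑ i ∈ Finset.range (N + k), a i * b i - ∑ i ∈ Finset.range N, a i * b i
      - S k * b (N + k)| ≤ 2 * C * (b N - b (N + k)) := by
    induction k with
    | zero => simp [hS]
    | succ k ih =>
      have e : ∑ i ∈ Finset.range (N + (k + 1)), a i * b i - ∑ i ∈ Finset.range N, a i * b i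
        - S (k + 1) * b (N + (k + 1)) = (∑ i ∈ Finset.range (N + k), a i * b i
          - ∑ i ∈ Finset.range N, a i * b i - S k * b (N + k))
          + S (k + 1) * (b (N + k) - b (N + (k + 1))) := by
        simp only [hS, ← add_assoc, Finset.sum_range_succ]; ring
      rw [e]
      refine (abs_add_le _ _).trans ?_
      have hd : 0 ≤ b (N + k) - b (N + (k + 1)) := sub_nonneg.mpr (hb (by omega))
      rw [abs_mul, abs_of_nonneg hd]
      have := mul_le_mul_of_nonneg_right (hSb (k + 1)) hd
      linarith
  have h3 : |S k * b (N + k)| ≤ 2 * C * b (N + k) := by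
    rw [abs_mul, abs_of_nonneg (hb0 _)]
    exact mul_le_mul_of_nonneg_right (hSb k) (hb0 _)
  have := abs_add_le (∑ i ∈ Finset.range (N + k), a i * b i - ∑ i ∈ Finset.range N, a i * b i
      - S k * b (N + k)) (S k * b (N + k))
  rw [sub_add_cancel] at this
  linarith

lemma bridge {ι : Type*} {l : Filter ι} (a : ℕ → ℝ) (C ℓ : ℝ)
    (ha : ∀ n, |∑ i ∈ Finset.range n, a i| ≤ C)
    (hℓ : Tendsto (fun n => ∑ i ∈ Finset.range n, a i * (1 / ((i : ℝ) + 1))) atTop (𝓝 ℓ))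
    (b : ι → ℕ → ℝ) (F : ι → ℝ)
    (hb : ∀ᶠ t in l, Antitone (b t) ∧ (∀ n, 0 ≤ b t n) ∧ (∀ n, b t n ≤ 1 / ((n : ℝ) + 1)) ∧
      HasSum (fun n => a n * b t n) (F t))
    (hlim : ∀ n, Tendsto (fun t => b t n) l (𝓝 (1 / ((n : ℝ) + 1)))) :
    Tendsto F l (𝓝 ℓ) := by
  have hC : 0 ≤ C := (abs_nonneg _).trans (ha 0)
  rw [Metric.tendsto_nhds]
  intro ε hε
  have t1 : Tendsto (fun N : ℕ => 2 * C * (1 / ((N : ℝ) + 1))) atTop (𝓝 0) := by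
    simpa using (tendsto_one_div_add_atTop_nhds_zero_nat (𝕜 := ℝ)).const_mul (2 * C)
  obtain ⟨N, hN1, hN2⟩ := ((t1.eventually (gt_mem_nhds (show (0 : ℝ) < ε / 3 by positivity))).and
    (Metric.tendsto_nhds.mp hℓ (ε / 3) (by positivity))).exists
  have t2 : Tendsto (fun t => ∑ i ∈ Finset.range N, a i * b t i) l
      (𝓝 (∑ i ∈ Finset.range N, a i * (1 / ((i : ℝ) + 1)))) :=
    tendsto_finsetSum _ fun i _ => (hlim i).const_mul _
  filter_upwards [hb, Metric.tendsto_nhds.mp t2 (ε / 3) (by positivity)] with t ⟨h1, h2, h3, h4⟩ h5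
  have h6 : |F t - ∑ i ∈ Finset.range N, a i * b t i| ≤ 2 * C * b t N := by
    have t3 : Tendsto (fun k => |∑ i ∈ Finset.range (N + k), a i * b t i -
        ∑ i ∈ Finset.range N, a i * b t i|) atTop (𝓝 |F t - ∑ i ∈ Finset.range N, a i * b t i|) := by
      have := (h4.tendsto_sum_nat.comp (tendsto_add_atTop_nat N)).sub_const
        (∑ i ∈ Finset.range N, a i * b t i)
      refine (this.abs).congr fun k => ?_
      simp [add_comm]
    exact le_of_tendsto t3 (Eventually.of_forall fun k => tail_bound a (b t) C ha h1 h2 N k)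
  have h7 : 2 * C * b t N ≤ 2 * C * (1 / ((N : ℝ) + 1)) :=
    mul_le_mul_of_nonneg_left (h3 N) (by positivity)
  rw [Real.dist_eq] at *
  have q1 := abs_le.mp h6; have q2 := abs_lt.mp h5; have q3 := abs_lt.mp hN2
  rw [abs_lt]
  constructor <;> linarith

/-- Positivity of the Dirichlet series. -/
lemma dirichlet_nonneg (ψ : ℕ →*₀ ℝ) (hψ : ∀ n, |ψ n| ≤ 1) (s : ℝ) (hs : 1 < s) (A : ℝ)
    (hA : HasSum (fun n : ℕ => ψ n * (n : ℝ) ^ (-s)) A) : 0 ≤ A := by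
  let f : ℕ →*₀ ℝ :=
    { toFun := fun n => ψ n * (n : ℝ) ^ (-s)
      map_zero' := by simp
      map_one' := by simp
      map_mul' := by
        intro x y
        rw [map_mul, Nat.cast_mul, Real.mul_rpow (by positivity) (by positivity)]
        ring }
  have hle : ∀ n : ℕ, ‖f n‖ ≤ (n : ℝ) ^ (-s) := by
    intro n
    change |ψ n * (n : ℝ) ^ (-s)| ≤ _
    rw [abs_mul, abs_of_nonneg (a := (n : ℝ) ^ (-s)) (by positivity)]
    exact mul_le_of_le_one_left (by positivity) (hψ n)
  have hsum : Summable (‖f ·‖) :=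
    Summable.of_nonneg_of_le (fun _ => norm_nonneg _) hle (Real.summable_nat_rpow.mpr (by linarith))
  have hE := EulerProduct.eulerProduct_completely_multiplicative_hasProd hsum
  have hAe : ∑' n, f n = A := hA.tsum_eq
  rw [hAe] at hE
  rw [HasProd, SummationFilter.unconditional_filter] at hE
  refine ge_of_tendsto hE (Eventually.of_forall fun S => ?_)
  apply Finset.prod_nonneg
  intro q _
  rw [inv_nonneg, sub_nonneg]
  refine (le_abs_self _).trans ((hle q).trans ?_)
  apply Real.rpow_le_one_of_one_le_of_nonpos
  · exact_mod_cast q.2.one_le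
  · linarith

lemma abel_nonneg (ψ : ℕ →*₀ ℝ) (hψ : ∀ n, |ψ n| ≤ 1) (C : ℝ)
    (hC : ∀ n, |∑ i ∈ Finset.range n, ψ (i + 1)| ≤ C) (A : ℝ)
    (F : ℝ → ℝ) (hF : ∀ r : ℝ, 0 < r → r < 1 → HasSum (fun n : ℕ => ψ n * (r ^ n / n)) (F r))
    (hA : Tendsto F (𝓝[<] 1) (𝓝 A)) : 0 ≤ A := by
  have hanti : Antitone (fun n : ℕ => 1 / ((n : ℝ) + 1)) := fun m n h =>
    Nat.one_div_le_one_div h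
  obtain ⟨ℓ, hℓ⟩ : ∃ ℓ, Tendsto (fun n => ∑ i ∈ Finset.range n, ψ (i + 1) * (1 / ((i : ℝ) + 1)))
      atTop (𝓝 ℓ) := by
    have := hanti.cauchySeq_series_mul_of_tendsto_zero_of_bounded
      (z := fun i => ψ (i + 1)) tendsto_one_div_add_atTop_nhds_zero_nat (b := C) (fun n => by simpa using hC n)
    obtain ⟨ℓ, hℓ⟩ := cauchySeq_tendsto_of_complete this
    exact ⟨ℓ, by simpa [mul_comm] using hℓ⟩
  have hFl : Tendsto F (𝓝[<] 1) (𝓝 ℓ) := by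
    refine bridge (fun i => ψ (i + 1)) C ℓ hC hℓ (fun r n => r ^ (n + 1) / ((n : ℝ) + 1)) F ?_ ?_
    · filter_upwards [Ioo_mem_nhdsLT (show (0 : ℝ) < 1 by norm_num)] with r hr
      refine ⟨?_, ?_, ?_, ?_⟩
      · intro m n h
        have : r ^ (n + 1) ≤ r ^ (m + 1) := pow_le_pow_of_le_one hr.1.le hr.2.le (by omega)
        have h0 : 0 ≤ r ^ (m + 1) := pow_nonneg hr.1.le _
        have : (m : ℝ) ≤ n := by exact_mod_cast h
        dsimp only
        gcongr
      · intro n; have := hr.1; positivity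
      · intro n
        have : r ^ (n + 1) ≤ 1 := pow_le_one₀ hr.1.le hr.2.le
        gcongr
      · have := (hasSum_nat_add_iff' 1).mpr (hF r hr.1 hr.2)
        simpa using this
    · intro n
      have : ContinuousAt (fun r : ℝ => r ^ (n + 1) / ((n : ℝ) + 1)) 1 := by fun_prop
      have := this.tendsto
      simp only [one_pow] at this
      exact this.mono_left nhdsWithin_le_nhds
  have hAl : A = ℓ := tendsto_nhds_unique hA hFl
  rw [hAl]
  have hsm : ∀ s : ℝ, 1 < s → Summable (fun n : ℕ => ψ n * (n : ℝ) ^ (-s)) := by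
    intro s hs
    refine Summable.of_norm_bounded (Real.summable_nat_rpow.mpr (show -s < -1 by linarith)) fun n => ?_
    rw [Real.norm_eq_abs, abs_mul, abs_of_nonneg (a := (n : ℝ) ^ (-s)) (by positivity)]
    exact mul_le_of_le_one_left (by positivity) (hψ n)
  have hD : Tendsto (fun s : ℝ => ∑' n : ℕ, ψ n * (n : ℝ) ^ (-s)) (𝓝[>] 1) (𝓝 ℓ) := by
    refine bridge (fun i => ψ (i + 1)) C ℓ hC hℓ (fun s n => ((n : ℝ) + 1) ^ (-s)) _ ?_ ?_
    · filter_upwards [self_mem_nhdsWithin] with s hs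
      have hs : 1 < s := hs
      refine ⟨?_, ?_, ?_, ?_⟩
      · intro m n h
        have : (m : ℝ) ≤ n := by exact_mod_cast h
        exact Real.rpow_le_rpow_of_nonpos (by positivity) (by linarith) (by linarith)
      · intro n; positivity
      · intro n
        rw [one_div, ← Real.rpow_neg_one]
        exact Real.rpow_le_rpow_of_exponent_le (by linarith [(Nat.cast_nonneg n : (0 : ℝ) ≤ n)]) (by linarith)
      · have := (hasSum_nat_add_iff' 1).mpr (hsm s hs).hasSum
        simpa using this
    · intro n
      have : ContinuousAt (fun s : ℝ => ((n : ℝ) + 1) ^ (-s)) 1 := by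
        apply ContinuousAt.rpow (by fun_prop) (by fun_prop)
        left; positivity
      have := this.tendsto
      rw [Real.rpow_neg_one, ← one_div] at this
      exact this.mono_left nhdsWithin_le_nhds
  refine ge_of_tendsto hD ?_
  filter_upwards [self_mem_nhdsWithin] with s hs
  exact dirichlet_nonneg ψ hψ s hs _ (hsm s hs).hasSum

lemma sawtooth (x : ℝ) (hx0 : 0 < x) (hx1 : x < 1) :
    Tendsto (fun r : ℝ => (-Complex.log (1 - r * Complex.exp (2 * Real.pi * Complex.I * x))).im)
      (𝓝[<] 1) (𝓝 (Real.pi * (1 / 2 - x))) := by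
  have hs : 0 < Real.sin (Real.pi * x) :=
    Real.sin_pos_of_pos_of_lt_pi (by positivity) (by nlinarith [Real.pi_pos])
  have e : (1 : ℂ) - (1 : ℝ) * Complex.exp (2 * Real.pi * Complex.I * x) =
      ((2 * Real.sin (Real.pi * x) : ℝ) : ℂ) * (Complex.cos ((Real.pi * x - Real.pi / 2 : ℝ)) +
        Complex.sin ((Real.pi * x - Real.pi / 2 : ℝ)) * Complex.I) := by
    rw [show (2 * Real.pi * Complex.I * x : ℂ) = ((2 * (Real.pi * x) : ℝ) : ℂ) * Complex.I by push_cast; ring, Complex.exp_mul_I]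
    rw [← Complex.ofReal_cos, ← Complex.ofReal_sin, ← Complex.ofReal_cos, ← Complex.ofReal_sin,
      Real.cos_sub_pi_div_two, Real.sin_sub_pi_div_two, Real.cos_two_mul, Real.sin_two_mul]
    have := Real.sin_sq_add_cos_sq (Real.pi * x)
    have this2 := congrArg (fun t : ℝ => (t : ℂ)) this
    push_cast [-Complex.ofReal_cos, -Complex.ofReal_sin] at this2 ⊢
    linear_combination -2 * this2
  have harg : (-Complex.log (1 - (1 : ℝ) * Complex.exp (2 * Real.pi * Complex.I * x))).im =
      Real.pi * (1 / 2 - x) := by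
    rw [Complex.neg_im, Complex.log_im, e, Complex.arg_mul_cos_add_sin_mul_I (by positivity)]
    · ring
    · constructor <;> nlinarith [Real.pi_pos]
  have hslit : (1 : ℂ) - (1 : ℝ) * Complex.exp (2 * Real.pi * Complex.I * x) ∈ Complex.slitPlane := by
    left
    rw [e, ← Complex.ofReal_cos, ← Complex.ofReal_sin, Real.cos_sub_pi_div_two]
    simp [-Complex.ofReal_cos, -Complex.ofReal_sin]
    positivity
  rw [← harg]
  have : ContinuousAt (fun r : ℝ => (-Complex.log (1 - r * Complex.exp (2 * Real.pi * Complex.I * x))).im) 1 := by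
    apply Complex.continuous_im.continuousAt.comp
    apply ContinuousAt.neg
    have hc : ContinuousAt (fun r : ℝ => (1 : ℂ) - r * Complex.exp (2 * Real.pi * Complex.I * x)) 1 := by
      fun_prop
    exact hc.clog hslit
  exact this.tendsto.mono_left nhdsWithin_le_nhds

lemma sum_zmod_range {M : Type*} [AddCommMonoid M] (p : ℕ) [NeZero p] (f : ZMod p → M) :
    ∑ x : ZMod p, f x = ∑ a ∈ Finset.range p, f (a : ZMod p) := by
  refine Finset.sum_bij' (fun x _ => x.val) (fun a _ => (a : ZMod p)) ?_ ?_ ?_ ?_ ?_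
  · intro x _; exact Finset.mem_range.mpr (ZMod.val_lt x)
  · intro a _; exact Finset.mem_univ _
  · intro x _; simp
  · intro a ha; exact ZMod.val_cast_of_lt (Finset.mem_range.mp ha)
  · intro x _; simp

lemma sine_prod (p m : ℕ) (hm : p = 2 * m + 1) :
    (∏ k ∈ Finset.range m, (2 * Real.sin (Real.pi * ((k : ℝ) + 1) / p))) ^ 2 = p := by
  have hζ := Complex.isPrimitiveRoot_exp p (by omega)
  have hζ' : IsPrimitiveRoot (Complex.exp (2 * Real.pi * Complex.I / p)) (2 * m + 1) := by
    rwa [hm] at hζ ⊢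
  have h1 := congrArg norm hζ'.prod_one_sub_pow_eq_order
  have hp0 : (0 : ℝ) < p := by rw [hm]; positivity
  have h2 : ∀ k ∈ Finset.range (2 * m), ‖1 - Complex.exp (2 * Real.pi * Complex.I / p) ^ (k + 1)‖ =
      2 * Real.sin (Real.pi * ((k : ℝ) + 1) / p) := by
    intro k hk
    have hk := Finset.mem_range.mp hk
    rw [← Complex.exp_nat_mul, norm_sub_rev]
    have e : (((k + 1 : ℕ) : ℂ) * (2 * Real.pi * Complex.I / p)) =
        Complex.I * ((2 * (Real.pi * ((k : ℝ) + 1) / p) : ℝ) : ℂ) := by push_cast; ring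
    rw [e, Complex.norm_exp_I_mul_ofReal_sub_one, mul_div_cancel_left₀ _ (two_ne_zero), Real.norm_eq_abs,
      abs_of_nonneg]
    have : 0 ≤ Real.sin (Real.pi * ((k : ℝ) + 1) / p) := by
      apply Real.sin_nonneg_of_nonneg_of_le_pi (by positivity)
      rw [div_le_iff₀ hp0]
      have : (k : ℝ) + 1 ≤ p := by rw [hm]; exact_mod_cast (by omega)
      nlinarith [Real.pi_pos]
    positivity
  rw [norm_prod, Finset.prod_congr rfl h2, two_mul, Finset.prod_range_add] at h1
  have h3 : (p : ℝ) = ‖((m + m : ℕ) : ℂ) + 1‖ := by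
    rw [← Nat.cast_succ, Complex.norm_natCast, hm, ← two_mul]
  refine Eq.trans ?_ (h1.trans h3.symm)
  rw [sq]
  congr 1
  rw [← Finset.prod_range_reflect (fun x => (2 * Real.sin (Real.pi * (((m + x : ℕ) : ℝ) + 1) / p)))]
  apply Finset.prod_congr rfl
  intro k hk
  have hk := Finset.mem_range.mp hk
  congr 1
  rw [← Real.sin_pi_sub]
  congr 1
  have h1 : m - 1 - k = m - (k + 1) := by omega
  rw [h1, Nat.cast_add, Nat.cast_sub (by omega)]
  field_simp
  rw [hm]; push_cast; ring

lemma sine_prod' (p m : ℕ) (hm : p = 2 * m + 1) :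
    ∏ k ∈ Finset.range m, (2 * Real.sin (Real.pi * ((k : ℝ) + 1) / p)) = Real.sqrt p := by
  have hp0 : (0 : ℝ) < p := by rw [hm]; positivity
  refine ((Real.sqrt_eq_iff_mul_self_eq hp0.le ?_).mpr (by rw [← sq]; exact (sine_prod p m hm).symm)).symm
  apply Finset.prod_nonneg
  intro k hk
  have hk := Finset.mem_range.mp hk
  have : 0 ≤ Real.sin (Real.pi * ((k : ℝ) + 1) / p) := by
    apply Real.sin_nonneg_of_nonneg_of_le_pi (by positivity)
    rw [div_le_iff₀ hp0]
    have : (k : ℝ) + 1 ≤ p := by rw [hm]; exact_mod_cast (by omega)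
    nlinarith [Real.pi_pos]
  positivity

lemma zeta_factor (p h n : ℕ) (hp : 0 < p) (hh : 2 * h = p + 1) (ζ : ℂ)
    (hζ : ζ = Complex.exp (2 * Real.pi * Complex.I / p)) :
    ζ ^ (n * h) - ζ ^ (n * h * (p - 1)) =
      (-1) ^ n * (Complex.I * ((2 * Real.sin (Real.pi * n / p) : ℝ) : ℂ)) := by
  have hpc : (p : ℂ) ≠ 0 := by exact_mod_cast hp.ne'
  have h1 : ζ ^ (n * h) = (-1) ^ n * Complex.exp ((Real.pi * n / p : ℝ) * Complex.I) := by
    rw [hζ, ← Complex.exp_nat_mul, ← Complex.exp_pi_mul_I, ← Complex.exp_nat_mul, ← Complex.exp_add]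
    congr 1
    have : (2 * h : ℂ) = p + 1 := by exact_mod_cast hh
    push_cast
    field_simp
    linear_combination (n : ℂ) * this
  have h2 : ζ ^ p = 1 := by rw [hζ]; exact (Complex.isPrimitiveRoot_exp p hp.ne').pow_eq_one
  have h3 : ζ ^ (n * h * (p - 1)) * ζ ^ (n * h) = 1 := by
    rw [← pow_add, ← Nat.mul_succ, Nat.succ_eq_add_one, Nat.sub_add_cancel hp, mul_comm, pow_mul, h2, one_pow]
  have h4 : ζ ^ (n * h * (p - 1)) = (-1) ^ n * Complex.exp (-((Real.pi * n / p : ℝ) * Complex.I)) := by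
    have hne : ζ ^ (n * h) ≠ 0 := right_ne_zero_of_mul_eq_one h3
    apply mul_right_cancel₀ hne
    rw [h3, h1, mul_mul_mul_comm, ← Complex.exp_add, neg_add_cancel, Complex.exp_zero, ← mul_pow]
    simp
  rw [h4, h1]
  rw [← neg_mul, Complex.exp_mul_I, Complex.exp_mul_I, Complex.cos_neg, Complex.sin_neg]
  push_cast
  ring

lemma sign_prod (t : ℕ) :
    (∏ k ∈ Finset.range (2 * t), (-1 : ℂ) ^ (k + 1)) = (-1) ^ t := by
  induction t with
  | zero => simp
  | succ t ih =>
    rw [show 2 * (t + 1) = 2 * t + 1 + 1 by ring, Finset.prod_range_succ, Finset.prod_range_succ, ih]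
    simp only [pow_succ, pow_mul]; norm_num

lemma leg_shift (p : ℕ) [Fact p.Prime] (hp : p ≠ 2) (ζ : ℂ)
    (hζ : ζ = Complex.exp (2 * Real.pi * Complex.I / p)) (n : ℕ) :
    ∑ a ∈ Finset.range p, (legendreSym p a : ℂ) * ζ ^ (n * a) =
      legendreSym p n * ∑ a ∈ Finset.range p, (legendreSym p a : ℂ) * ζ ^ a := by
  have hpp := (Fact.out : p.Prime)
  set χ : MulChar (ZMod p) ℂ := (quadraticChar (ZMod p)).ringHomComp (Int.castRingHom ℂ) with hχ
  have hleg : ∀ a : ℕ, (legendreSym p a : ℂ) = χ (a : ZMod p) := by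
    intro a; simp [hχ, legendreSym]
  have hz : ∀ a : ℕ, ζ ^ a = ZMod.stdAddChar (a : ZMod p) := by
    intro a
    have := ZMod.stdAddChar_coe (N := p) (a : ℤ)
    push_cast at this
    rw [this, hζ, ← Complex.exp_nat_mul]
    congr 1; ring
  simp only [hleg, hz]
  have e1 := sum_zmod_range p (fun x => χ x * ZMod.stdAddChar x)
  have e2 := sum_zmod_range p (fun x => χ x * ZMod.stdAddChar ((n : ZMod p) * x))
  push_cast
  rw [← e1, ← e2]
  by_cases hn : (n : ZMod p) = 0
  · rw [hn]
    have := quadraticChar_sum_zero (F := ZMod p) (by rw [ZMod.ringChar_zmod_n]; exact hp)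
    have h0 : ∑ x : ZMod p, χ x = 0 := by
      simp only [hχ, MulChar.ringHomComp_apply]
      rw [← map_sum, this, map_zero]
    have h00 : χ 0 = 0 := MulChar.map_zero χ
    simp [h0, h00]
  · have hg := gaussSum_mulShift χ (ZMod.stdAddChar (N := p)) (Units.mk0 _ hn)
    simp only [gaussSum, AddChar.mulShift_apply, Units.val_mk0] at hg
    rw [← hg, ← mul_assoc]
    have : χ (n : ZMod p) * χ n = 1 := by
      rw [← map_mul, ← sq, hχ]
      simp [MulChar.ringHomComp_apply, quadraticChar_sq_one' hn]
    rw [this, one_mul]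

lemma gauss_sq (p m : ℕ) [Fact p.Prime] (hm : p = 2 * m + 1) (ζ : ℂ)
    (hζ : ζ = Complex.exp (2 * Real.pi * Complex.I / p)) :
    (∑ a ∈ Finset.range p, (legendreSym p a : ℂ) * ζ ^ a) ^ 2 = (-1) ^ m * p := by
  have hpp := (Fact.out : p.Prime)
  have hp2 : ringChar (ZMod p) ≠ 2 := by rw [ZMod.ringChar_zmod_n]; omega
  set χ : MulChar (ZMod p) ℂ := (quadraticChar (ZMod p)).ringHomComp (Int.castRingHom ℂ) with hχ
  have hleg : ∀ a : ℕ, (legendreSym p a : ℂ) = χ (a : ZMod p) := by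
    intro a; simp [hχ, legendreSym]
  have hz : ∀ a : ℕ, ζ ^ a = ZMod.stdAddChar (a : ZMod p) := by
    intro a
    have := ZMod.stdAddChar_coe (N := p) (a : ℤ)
    push_cast at this
    rw [this, hζ, ← Complex.exp_nat_mul]
    congr 1; ring
  simp only [hleg, hz]
  have e1 := sum_zmod_range p (fun x => χ x * ZMod.stdAddChar x)
  rw [← e1]
  have h1 : χ ≠ 1 := (MulChar.ringHomComp_ne_one_iff Int.cast_injective).mpr (quadraticChar_ne_one hp2)
  have h2 : χ.IsQuadratic := (quadraticChar_isQuadratic (ZMod p)).comp _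
  have := gaussSum_sq h1 h2 (ZMod.isPrimitive_stdAddChar p)
  rw [gaussSum] at this
  rw [this, ZMod.card]
  congr 1
  have h3 := quadraticChar_neg_one hp2
  rw [hχ, MulChar.ringHomComp_apply, h3, ZMod.card, ZMod.χ₄_eq_neg_one_pow (by omega)]
  simp
  congr 1; omega

lemma gauss_value (p : ℕ) [Fact p.Prime] (hp : p ≠ 2) (ζ : ℂ)
    (hζ : ζ = Complex.exp (2 * Real.pi * Complex.I / p)) :
    ∑ a ∈ Finset.range p, (legendreSym p a : ℂ) * ζ ^ a =
      (if p % 4 = 1 then 1 else Complex.I) * (Real.sqrt p : ℝ) := by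
  have hpp := (Fact.out : p.Prime)
  have hodd := hpp.eq_two_or_odd
  obtain ⟨m, hm⟩ : ∃ m, p = 2 * m + 1 := ⟨p / 2, by omega⟩
  have hmpos : 0 < m := by have := hpp.two_le; omega
  have hh : 2 * (m + 1) = p + 1 := by omega
  set P := ∏ k ∈ Finset.range m, (ζ ^ ((k + 1) * (m + 1)) - ζ ^ ((k + 1) * (m + 1) * (p - 1))) with hP
  have hPv : P = (∏ k ∈ Finset.range m, (-1 : ℂ) ^ (k + 1)) * (Complex.I ^ m * (Real.sqrt p : ℝ)) := by
    rw [hP, ← sine_prod' p m hm, Complex.ofReal_prod, ← Finset.card_range m, ← Finset.prod_const,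
      Finset.card_range, ← Finset.prod_mul_distrib, ← Finset.prod_mul_distrib]
    apply Finset.prod_congr rfl
    intro k _
    rw [zeta_factor p (m + 1) (k + 1) hpp.pos hh ζ hζ]
    push_cast
    ring
  have hPsq : P ^ 2 = (-1) ^ m * p := by
    rw [hPv, mul_pow, mul_pow, ← Complex.ofReal_pow, Real.sq_sqrt (by positivity), ← pow_mul,
      mul_comm m 2, pow_mul, Complex.I_sq, ← Finset.prod_pow]
    rw [Finset.prod_eq_one, one_mul]
    · simp
    · intro k _; rw [← pow_mul, mul_comm, pow_mul]; simp
  have hg2 := gauss_sq p m hm ζ hζ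
  have hprim : IsPrimitiveRoot ζ p := by rw [hζ]; exact Complex.isPrimitiveRoot_exp p hpp.pos.ne'
  obtain ⟨ε, hε, hge⟩ : ∃ ε : ℤ, (ε = 1 ∨ ε = -1) ∧
      ∑ a ∈ Finset.range p, (legendreSym p a : ℂ) * ζ ^ a = ε * P := by
    rcases sq_eq_sq_iff_eq_or_eq_neg.mp (hg2.trans hPsq.symm) with h | h
    · exact ⟨1, Or.inl rfl, by rw [h]; simp⟩
    · exact ⟨-1, Or.inr rfl, by rw [h]; simp⟩
  have hs := sign_of_gauss p m (m + 1) hm hmpos hh ε hε ζ hprim hge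
  rw [hge, hPv, hs, ← mul_assoc, ← mul_assoc]
  congr 1
  rcases Nat.even_or_odd' m with ⟨t, ht | ht⟩
  · rw [if_pos (by omega), ht, sign_prod, pow_mul, pow_mul, Complex.I_sq]
    push_cast
    rw [mul_assoc, ← mul_pow]; simp
  · rw [if_neg (by omega), ht, Finset.prod_range_succ, sign_prod, pow_succ Complex.I, pow_mul Complex.I, Complex.I_sq]
    push_cast
    have : ((-1 : ℂ) ^ t) ^ 2 = 1 := by rw [← pow_mul, mul_comm, pow_mul]; simp
    simp only [pow_succ, pow_mul]
    norm_num
    linear_combination Complex.I * this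

lemma periodic_bound (f : ℕ → ℝ) (N : ℕ) (hN : 0 < N) (hf : ∀ n, |f n| ≤ 1)
    (hper : ∀ n, f (n + N) = f n) (h0 : ∑ i ∈ Finset.range N, f i = 0) (n : ℕ) :
    |∑ i ∈ Finset.range n, f i| ≤ N := by
  induction n using Nat.strong_induction_on with
  | _ n ih =>
    by_cases hn : n < N
    · refine (Finset.abs_sum_le_sum_abs _ _).trans ?_
      refine (Finset.sum_le_sum fun i _ => hf i).trans ?_
      simp
      exact_mod_cast hn.le
    · obtain ⟨k, rfl⟩ := Nat.exists_eq_add_of_le (not_lt.mp hn)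
      rw [Finset.sum_range_add, h0, zero_add]
      simp only [add_comm N, hper]
      exact ih k (by omega)

lemma sum_blocks (f : ℕ → ℝ) (p : ℕ) :
    ∑ i ∈ Finset.range (3 * p), f i =
      ∑ a ∈ Finset.range p, f (3 * a) + ∑ a ∈ Finset.range p, f (3 * a + 1)
        + ∑ a ∈ Finset.range p, f (3 * a + 2) := by
  induction p with
  | zero => simp
  | succ p ih =>
    rw [show 3 * (p + 1) = 3 * p + 1 + 1 + 1 by ring]
    simp only [Finset.sum_range_succ, ih]
    ring

lemma leg_ap (p : ℕ) [Fact p.Prime] (hp : 3 < p) (b : ℕ) :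
    ∑ a ∈ Finset.range p, (legendreSym p ((3 * a + b : ℕ) : ℤ)) = 0 := by
  have h3 : (3 : ZMod p) ≠ 0 := by
    have : ((3 : ℕ) : ZMod p) ≠ 0 := by
      rw [Ne, ZMod.natCast_eq_zero_iff]
      exact Nat.not_dvd_of_pos_of_lt (by omega) hp
    exact_mod_cast this
  have e := sum_zmod_range p (fun x => quadraticChar (ZMod p) (3 * x + b))
  have e2 := ((Equiv.mulLeft₀ (3 : ZMod p) h3).trans (Equiv.addRight (b : ZMod p))).sum_comp
    (fun x => quadraticChar (ZMod p) x)
  have e3 : ∑ x : ZMod p, quadraticChar (ZMod p) (3 * x + b) = ∑ x : ZMod p, quadraticChar (ZMod p) x := e2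
  rw [e3, quadraticChar_sum_zero (by rw [ZMod.ringChar_zmod_n]; omega)] at e
  rw [e]
  apply Finset.sum_congr rfl
  intro a _
  simp [legendreSym]

lemma leg3_mod (n : ℕ) : legendreSym 3 (n : ℤ) = if n % 3 = 0 then 0 else if n % 3 = 1 then 1 else -1 := by
  rw [legendreSym.mod]
  have : n % 3 = 0 ∨ n % 3 = 1 ∨ n % 3 = 2 := by omega
  rcases this with h | h | h
  · rw [show ((n : ℤ) % ((3 : ℕ) : ℤ)) = 0 by omega]; simp [h]
  · rw [show ((n : ℤ) % ((3 : ℕ) : ℤ)) = 1 by omega]; simp [h]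
  · rw [show ((n : ℤ) % ((3 : ℕ) : ℤ)) = 2 by omega]; simp [h]; decide

lemma leg_abs (p : ℕ) [Fact p.Prime] (a : ℤ) : |(legendreSym p a : ℝ)| ≤ 1 := by
  by_cases h : ((a : ℤ) : ZMod p) = 0
  · rw [(legendreSym.eq_zero_iff p a).mpr h]; simp
  · rcases legendreSym.eq_one_or_neg_one p h with h | h <;> rw [h] <;> simp

/-- The completely multiplicative function `(n/p) (n/3)^j`. -/
noncomputable def psiFun (p : ℕ) [Fact p.Prime] (j : ℕ) : ℕ →*₀ ℝ where
  toFun n := (legendreSym p n : ℝ) * (legendreSym 3 n : ℝ) ^ j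
  map_zero' := by simp
  map_one' := by simp
  map_mul' x y := by
    push_cast
    rw [legendreSym.mul, legendreSym.mul]
    push_cast
    ring

lemma psiFun_apply (p : ℕ) [Fact p.Prime] (j n : ℕ) :
    psiFun p j n = (legendreSym p n : ℝ) * (legendreSym 3 n : ℝ) ^ j := rfl

lemma psiFun_abs (p : ℕ) [Fact p.Prime] (j n : ℕ) : |psiFun p j n| ≤ 1 := by
  rw [psiFun_apply, abs_mul, abs_pow]
  exact mul_le_one₀ (leg_abs p n) (by positivity) (pow_le_one₀ (abs_nonneg _) (leg_abs 3 n))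

lemma psiFun_bound (p : ℕ) [Fact p.Prime] (hp : 3 < p) (j : ℕ) (n : ℕ) :
    |∑ i ∈ Finset.range n, psiFun p j (i + 1)| ≤ ((3 * p : ℕ) : ℝ) := by
  have h := periodic_bound (fun n => psiFun p j n) (3 * p) (by omega) (psiFun_abs p j) ?_ ?_ (n + 1)
  · rw [Finset.sum_range_succ'] at h
    simpa using h
  · intro n
    simp only [psiFun_apply]
    congr 2
    · rw [legendreSym.mod, legendreSym.mod p (n : ℤ)]
      congr 1
      push_cast
      rw [mul_comm, Int.add_mul_emod_self_left]
    · rw [leg3_mod, leg3_mod, Nat.add_mul_mod_self_left]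
  · rw [sum_blocks]
    have hb : ∀ b : ℕ, ∑ a ∈ Finset.range p, psiFun p j (3 * a + b) = 0 := by
      intro b
      have : ∀ a ∈ Finset.range p, psiFun p j (3 * a + b) =
          (legendreSym p ((3 * a + b : ℕ) : ℤ) : ℝ) * (legendreSym 3 b : ℝ) ^ j := by
        intro a _
        rw [psiFun_apply]
        congr 2
        rw [leg3_mod, leg3_mod, Nat.mul_add_mod]
      rw [Finset.sum_congr rfl this, ← Finset.sum_mul, ← Int.cast_sum, leg_ap p hp b]
      simp
    have := hb 0; have := hb 1; have := hb 2
    simp_all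

lemma one_sub_omega (n : ℕ) (ω : ℂ) (hω : ω = Complex.exp (2 * Real.pi * Complex.I * (-1 / 3 : ℝ))) :
    1 - ω ^ n = (3 / 2 * (legendreSym 3 n : ℝ) ^ 2 : ℝ)
      + Complex.I * (Real.sqrt 3 / 2 * (legendreSym 3 n : ℝ) : ℝ) := by
  have h1 : ω = -1 / 2 - Complex.I * (Real.sqrt 3 / 2 : ℝ) := by
    rw [hω, show (2 * Real.pi * Complex.I * (-1 / 3 : ℝ) : ℂ) = ((-(Real.pi - Real.pi / 3) : ℝ) : ℂ) * Complex.I by push_cast; ring,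
      Complex.exp_mul_I, ← Complex.ofReal_cos, ← Complex.ofReal_sin, Real.cos_neg, Real.sin_neg,
      Real.cos_pi_sub, Real.sin_pi_sub, Real.cos_pi_div_three, Real.sin_pi_div_three]
    push_cast; ring
  have hs : ((Real.sqrt 3 : ℝ) : ℂ) ^ 2 = 3 := by
    rw [← Complex.ofReal_pow, Real.sq_sqrt (by norm_num)]; norm_num
  have hI := Complex.I_sq
  have h2 : ω ^ 2 = -1 / 2 + Complex.I * (Real.sqrt 3 / 2 : ℝ) := by
    rw [h1]; push_cast
    linear_combination (1 / 4 : ℂ) * Complex.I ^ 2 * hs + 3 / 4 * hI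
  have h3 : ω ^ 3 = 1 := by
    rw [pow_succ, h2, h1]; push_cast
    linear_combination (-1 / 4 : ℂ) * Complex.I ^ 2 * hs - 3 / 4 * hI
  have h4 : ω ^ n = ω ^ (n % 3) := by
    conv_lhs => rw [← Nat.div_add_mod n 3]
    rw [pow_add, pow_mul, h3, one_pow, one_mul]
  rw [h4, leg3_mod]
  have : n % 3 = 0 ∨ n % 3 = 1 ∨ n % 3 = 2 := by omega
  rcases this with h | h | h <;> rw [h]
  · simp
  · simp [h1]; ring
  · simp [h2]; ring

/-- For every prime `p > 3`, the sum `∑_{n=1}^{⌊p/3⌋} (n/p)` of Legendre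
symbols is nonnegative. -/
theorem stmt_10 (p : ℕ) [Fact p.Prime] (hp : 3 < p) :
    0 ≤ ∑ n ∈ Finset.Icc 1 (p / 3), legendreSym p (n : ℤ) := by
  have hpp := (Fact.out : p.Prime)
  have hpR : (0 : ℝ) < p := by exact_mod_cast hpp.pos
  have h3p : ¬ 3 ∣ p := by
    intro h
    have := (Nat.prime_dvd_prime_iff_eq Nat.prime_three hpp).mp h
    omega
  set ζ := Complex.exp (2 * Real.pi * Complex.I / p) with hζ
  set ω := Complex.exp (2 * Real.pi * Complex.I * (-1 / 3 : ℝ)) with hω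
  set e : ℝ → ℂ := fun x => Complex.exp (2 * Real.pi * Complex.I * x) with he
  set y : ℕ → ℝ := fun a => (a : ℝ) / p - 1 / 3 + (if 3 * a < p then 1 else 0) with hy
  have hex : ∀ a : ℕ, e ((a : ℝ) / p) = ζ ^ a := by
    intro a
    simp only [he, hζ]
    rw [← Complex.exp_nat_mul]
    congr 1; push_cast; ring
  have hey : ∀ a : ℕ, e (y a) = ζ ^ a * ω := by
    intro a
    rw [← hex, hω]
    simp only [he, hy]
    split_ifs
    · rw [← Complex.exp_add, ← mul_one (Complex.exp (_ + _)), ← Complex.exp_two_pi_mul_I, ← Complex.exp_add]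
      congr 1; push_cast; ring
    · rw [← Complex.exp_add]
      congr 1; push_cast; ring
  have hnorm : ∀ x : ℝ, ‖e x‖ = 1 := by
    intro x
    rw [he]
    simp only
    rw [show (2 * Real.pi * Complex.I * x : ℂ) = ((2 * Real.pi * x : ℝ) : ℂ) * Complex.I by push_cast; ring]
    exact Complex.norm_exp_ofReal_mul_I _
  set χ : ℕ → ℝ := fun a => (legendreSym p (a : ℤ) : ℝ) with hχ
  have hχ0 : χ 0 = 0 := by simp [hχ]
  have hsum0 : ∑ a ∈ Finset.range p, χ a = 0 := by
    have h1 := sum_zmod_range p (fun x => quadraticChar (ZMod p) x)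
    rw [quadraticChar_sum_zero (by rw [ZMod.ringChar_zmod_n]; omega)] at h1
    have h2 : ∑ a ∈ Finset.range p, legendreSym p (a : ℤ) = 0 := by
      rw [h1]; apply Finset.sum_congr rfl; intro a _; simp [legendreSym]
    simp only [hχ]; rw [← Int.cast_sum, h2]; simp
  -- the limit
  set F : ℝ → ℝ := fun r => ∑ a ∈ Finset.range p, χ a *
    ((-Complex.log (1 - r * e ((a : ℝ) / p))).im - (-Complex.log (1 - r * e (y a))).im) with hF
  have hlim : Tendsto F (𝓝[<] 1) (𝓝 (∑ a ∈ Finset.range p, χ a *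
      (Real.pi * (1 / 2 - (a : ℝ) / p) - Real.pi * (1 / 2 - y a)))) := by
    refine tendsto_finsetSum _ fun a ha => ?_
    have ha := Finset.mem_range.mp ha
    rcases Nat.eq_zero_or_pos a with rfl | ha0
    · simp only [hχ0, zero_mul]; exact tendsto_const_nhds
    · have ha0' : (0 : ℝ) < a := by exact_mod_cast ha0
      have hap : (a : ℝ) < p := by exact_mod_cast ha
      have hx0 : 0 < (a : ℝ) / p := by positivity
      have hx1 : (a : ℝ) / p < 1 := (div_lt_one hpR).mpr hap
      refine ((sawtooth _ hx0 hx1).sub (sawtooth (y a) ?_ ?_)).const_mul _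
      · simp only [hy]
        split_ifs with h
        · linarith
        · have h' : p < 3 * a := by omega
          have h'' : (p : ℝ) < 3 * a := by exact_mod_cast h'
          have : 1 / 3 < (a : ℝ) / p := by rw [div_lt_div_iff₀ (by norm_num) hpR]; linarith
          linarith
      · simp only [hy]
        split_ifs with h
        · have h'' : 3 * (a : ℝ) < p := by exact_mod_cast h
          have : (a : ℝ) / p < 1 / 3 := by rw [div_lt_div_iff₀ hpR (by norm_num)]; linarith
          linarith
        · linarith
  have hval : ∑ a ∈ Finset.range p, χ a *
      (Real.pi * (1 / 2 - (a : ℝ) / p) - Real.pi * (1 / 2 - y a)) =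
      Real.pi * ((∑ n ∈ Finset.Icc 1 (p / 3), legendreSym p (n : ℤ) : ℤ) : ℝ) := by
    have h1 : ∀ a ∈ Finset.range p, χ a *
      (Real.pi * (1 / 2 - (a : ℝ) / p) - Real.pi * (1 / 2 - y a)) =
      Real.pi * (if 3 * a < p then χ a else 0) - (Real.pi / 3) * χ a := by
      intro a _
      simp only [hy]
      split_ifs <;> ring
    rw [Finset.sum_congr rfl h1, Finset.sum_sub_distrib, ← Finset.mul_sum, ← Finset.mul_sum, hsum0,
      mul_zero, sub_zero, ← Finset.sum_filter]
    congr 1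
    push_cast
    symm
    apply Finset.sum_subset_zero_on_sdiff
    · intro n hn
      have := Finset.mem_Icc.mp hn
      rw [Finset.mem_filter, Finset.mem_range]
      omega
    · intro n hn
      rw [Finset.mem_sdiff, Finset.mem_filter, Finset.mem_range, Finset.mem_Icc] at hn
      have : n = 0 := by omega
      rw [this, hχ0]
    · intro n _; rfl
  -- the series
  set g : ℂ := (if p % 4 = 1 then 1 else Complex.I) * (Real.sqrt p : ℝ) with hg
  have hgv := gauss_value p (by omega) ζ hζ
  have hser : ∀ r : ℝ, 0 < r → r < 1 →
      HasSum (fun n : ℕ => (((r ^ n / n : ℝ) : ℂ) * ((χ n : ℂ) * g * (1 - ω ^ n))).im) (F r) := by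
    intro r hr0 hr1
    have hz : ∀ x : ℝ, HasSum (fun n : ℕ => ((r * e x) ^ n / (n : ℂ))) (-Complex.log (1 - r * e x)) := by
      intro x
      apply Complex.hasSum_taylorSeries_neg_log
      rw [norm_mul, hnorm, mul_one, Complex.norm_real, Real.norm_eq_abs, abs_of_pos hr0]
      exact hr1
    have h1 : HasSum (fun n : ℕ => ∑ a ∈ Finset.range p, (χ a : ℂ) *
        ((r * e ((a : ℝ) / p)) ^ n / (n : ℂ) - (r * e (y a)) ^ n / (n : ℂ)))
        (∑ a ∈ Finset.range p, (χ a : ℂ) *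
          (-Complex.log (1 - r * e ((a : ℝ) / p)) - -Complex.log (1 - r * e (y a)))) :=
      hasSum_sum fun a _ => ((hz _).sub (hz _)).mul_left _
    have h2 := Complex.hasSum_im h1
    have h3 : F r = (∑ a ∈ Finset.range p, (χ a : ℂ) *
          (-Complex.log (1 - r * e ((a : ℝ) / p)) - -Complex.log (1 - r * e (y a)))).im := by
      rw [Complex.im_sum]
      simp only [hF, Complex.im_ofReal_mul, Complex.sub_im]
    rw [h3]
    refine h2.congr_fun fun n => ?_
    congr 1
    have h4 := leg_shift p (by omega) ζ hζ n
    rw [hgv] at h4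
    have h5 : (χ n : ℂ) * g = ∑ a ∈ Finset.range p, (χ a : ℂ) * ζ ^ (n * a) := by
      simp only [hχ, Complex.ofReal_intCast]; exact h4.symm
    rw [h5, Finset.sum_mul, Finset.mul_sum]
    apply Finset.sum_congr rfl
    intro a _
    rw [hex, hey, mul_pow, mul_pow, mul_pow, ← pow_mul, mul_comm a n]
    push_cast
    ring
  have hsp : 0 < Real.sqrt p := Real.sqrt_pos.mpr hpR
  have hs3 : 0 < Real.sqrt 3 := Real.sqrt_pos.mpr (by norm_num)
  obtain ⟨j, c, hc, hjc⟩ : ∃ (j : ℕ) (c : ℝ), 0 < c ∧ ∀ n : ℕ,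
      ((χ n : ℂ) * g * (1 - ω ^ n)).im = c * psiFun p j n := by
    by_cases h4 : p % 4 = 1
    · refine ⟨1, Real.sqrt p * (Real.sqrt 3 / 2), by positivity, fun n => ?_⟩
      rw [one_sub_omega n ω hω, hg, if_pos h4, psiFun_apply, one_mul, ← Complex.ofReal_mul,
        Complex.im_ofReal_mul, Complex.add_im, Complex.ofReal_im, Complex.I_mul_im, Complex.ofReal_re]
      simp only [hχ]; ring
    · refine ⟨2, Real.sqrt p * (3 / 2), by positivity, fun n => ?_⟩
      rw [one_sub_omega n ω hω, hg, if_neg h4, psiFun_apply, mul_left_comm, mul_assoc, ← Complex.ofReal_mul,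
        Complex.I_mul_im, Complex.re_ofReal_mul, Complex.add_re, Complex.ofReal_re, Complex.I_mul_re, Complex.ofReal_im]
      simp only [hχ]; ring
  have hfin := abel_nonneg (psiFun p j) (psiFun_abs p j) _ (psiFun_bound p hp j) _ (fun r => F r / c)
    (fun r hr0 hr1 => ?_) (hlim.div_const c)
  · rw [hval] at hfin
    have h1 : 0 ≤ Real.pi * ((∑ n ∈ Finset.Icc 1 (p / 3), legendreSym p (n : ℤ) : ℤ) : ℝ) := by
      have := mul_nonneg hfin hc.le
      rwa [div_mul_cancel₀ _ hc.ne'] at this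
    have h2 := nonneg_of_mul_nonneg_right h1 Real.pi_pos
    exact_mod_cast h2
  · refine ((hser r hr0 hr1).div_const c).congr_fun fun n => ?_
    rw [Complex.im_ofReal_mul, hjc]
    field_simp
end

section
/- For every odd prime p, the sum Σ_{n=1}^{⌊p/4⌋} (n/p) is nonnegative. -/
open Polynomial in
lemma g1 (p : ℕ) [Fact p.Prime] (k : ℕ) (hk : k ≤ p - 1) :
    ∃ Q : (ZMod p)[X], ∑ j ∈ Finset.range p, C ((j : ZMod p) ^ k) * X ^ j = (X - 1) ^ (p - 1 - k) * Q
      ∧ Q.eval 1 = (-1) ^ k * (k.factorial : ZMod p) := by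
  have hp : p.Prime := Fact.out
  have hp1 : 1 < p := hp.one_lt
  induction k with
  | zero =>
    refine ⟨1, ?_, by simp⟩
    have h1 : (X - 1 : (ZMod p)[X]) ≠ 0 := X_sub_C_ne_zero (1 : ZMod p)
    apply mul_right_cancel₀ h1
    have := geom_sum_mul (X : (ZMod p)[X]) p
    simp only [pow_zero, map_one, one_mul, mul_one, Nat.sub_zero]
    rw [this, ← pow_succ, Nat.sub_add_cancel hp1.le, sub_pow_char, one_pow]
  | succ k ih =>
    obtain ⟨Q, hQ, hQ1⟩ := ih (by omega)
    obtain ⟨r, hr⟩ : ∃ r, p - 1 - k = r + 1 := ⟨p - 1 - k - 1, by omega⟩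
    refine ⟨X * ((C ((r : ZMod p) + 1)) * Q + (X - 1) * derivative Q), ?_, ?_⟩
    · have h2 : p - 1 - (k + 1) = r := by omega
      rw [h2]
      rw [hr] at hQ
      have h3 := congrArg (fun q => X * derivative q) hQ
      simp only [derivative_sum] at h3
      rw [Finset.mul_sum] at h3
      calc _ = ∑ j ∈ Finset.range p, X * derivative (C ((j : ZMod p) ^ k) * X ^ j) := by
            apply Finset.sum_congr rfl
            intro j _
            rw [derivative_C_mul]
            rcases j with _ | j
            · simp
            · rw [derivative_X_pow, pow_succ, C_mul]
              simp only [Nat.add_sub_cancel]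
              ring
        _ = _ := by
            rw [h3]
            simp [derivative_pow]
            ring
    · simp [hQ1, Nat.factorial_succ]
      have : ((r : ZMod p) + 1) = -(k + 1) := by
        have : ((r + 1 + k + 1 : ℕ) : ZMod p) = 0 := by
          rw [show r + 1 + k + 1 = p by omega]; simp
        push_cast at this
        linear_combination this
      rw [this]; ring

open Polynomial in
lemma g2 (p : ℕ) [Fact p.Prime] (e m : ℕ) :
    ∃ Q : (ZMod p)[X], X ^ e * ∏ k ∈ Finset.range m, (1 - X ^ (k + 1)) = (X - 1) ^ m * Q
      ∧ Q.eval 1 = (-1) ^ m * (m.factorial : ZMod p) := by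
  refine ⟨X ^ e * ∏ k ∈ Finset.range m, (-∑ i ∈ Finset.range (k + 1), X ^ i), ?_, ?_⟩
  · rw [mul_left_comm]
    congr 1
    rw [← Finset.card_range m, ← Finset.prod_const, Finset.card_range, ← Finset.prod_mul_distrib]
    apply Finset.prod_congr rfl
    intro k _
    have := mul_geom_sum (X : (ZMod p)[X]) (k + 1)
    linear_combination this
  · simp [eval_prod, eval_finsetSum]
    rw [← Finset.prod_range_add_one_eq_factorial]
    push_cast
    rw [← Finset.card_range m, ← Finset.prod_const, Finset.card_range, ← Finset.prod_mul_distrib]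
    apply Finset.prod_congr rfl
    intro k _
    ring

open Polynomial in
lemma g3 (p : ℕ) [Fact p.Prime] (hp2 : p ≠ 2) (c : ℕ → ℤ) (e : ℕ)
    (hc : ∀ j, ((c j : ℤ) : ZMod p) = (j : ZMod p) ^ (p / 2)) (ζ : ℂ) (hζ : IsPrimitiveRoot ζ p)
    (h : ∑ j ∈ Finset.range p, (c j : ℂ) * ζ ^ j
      = - (ζ ^ e * ∏ k ∈ Finset.range (p / 2), (1 - ζ ^ (k + 1)))) : False := by
  have hp : p.Prime := Fact.out
  have hp1 : 1 < p := hp.one_lt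
  have hodd := hp.odd_of_ne_two hp2
  obtain ⟨m, hm⟩ : ∃ m, p = 2 * m + 1 := hodd
  have hm2 : p / 2 = m := by omega
  rw [hm2] at h hc
  let F : ℤ[X] := ∑ j ∈ Finset.range p, C (c j) * X ^ j + X ^ e * ∏ k ∈ Finset.range m, (1 - X ^ (k + 1))
  have hF : aeval ζ F = 0 := by
    simp [F, map_sum, map_prod, h]
  have hdvd : cyclotomic p ℤ ∣ F := by
    rw [cyclotomic_eq_minpoly hζ hp.pos]
    exact minpoly.isIntegrallyClosed_dvd (hζ.isIntegral hp.pos) hF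
  obtain ⟨R, hR⟩ := hdvd
  have hR' := congrArg (Polynomial.map (Int.castRingHom (ZMod p))) hR
  have h1 : (X - 1 : (ZMod p)[X]) ≠ 0 := X_sub_C_ne_zero (1 : ZMod p)
  have hcyc : (cyclotomic p ℤ).map (Int.castRingHom (ZMod p)) = (X - 1) ^ (2 * m) := by
    rw [map_cyclotomic, cyclotomic_prime]
    apply mul_right_cancel₀ h1
    rw [geom_sum_mul, ← pow_succ, ← hm, sub_pow_char, one_pow]
  rw [Polynomial.map_mul, hcyc] at hR'
  obtain ⟨Q1, hQ1, hQ1'⟩ := g1 p m (by omega)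
  obtain ⟨Q2, hQ2, hQ2'⟩ := g2 p e m
  have hFm : F.map (Int.castRingHom (ZMod p)) = (X - 1) ^ m * (Q1 + Q2) := by
    rw [show p - 1 - m = m by omega] at hQ1
    rw [mul_add, ← hQ1, ← hQ2]
    simp only [F, Polynomial.map_add, Polynomial.map_sum, Polynomial.map_mul, Polynomial.map_pow, map_X,
      Polynomial.map_C, Polynomial.map_prod, Polynomial.map_sub, Polynomial.map_one, Int.coe_castRingHom, hc]
  rw [hFm, two_mul, pow_add, mul_assoc] at hR'
  have h5 := congrArg (eval 1) (mul_left_cancel₀ (pow_ne_zero m h1) hR')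
  have hm0 : m ≠ 0 := by omega
  simp [hQ1', hQ2', hm0] at h5
  have h6 : (2 : ZMod p) * ((-1) ^ m * m.factorial) = 0 := by linear_combination h5
  have h7 : (m.factorial : ZMod p) ≠ 0 := by
    rw [Ne, ZMod.natCast_eq_zero_iff, hp.dvd_factorial]; omega
  have h8 : (2 : ZMod p) ≠ 0 := by
    have : ((2 : ℕ) : ZMod p) ≠ 0 := by
      rw [Ne, ZMod.natCast_eq_zero_iff]
      intro h; have := Nat.le_of_dvd (by norm_num) h; omega
    exact_mod_cast this
  simp [h7, h8] at h6

lemma g_sum (p : ℕ) [Fact p.Prime] {M : Type*} [AddCommMonoid M] (F : ZMod p → M) :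
    ∑ a : ZMod p, F a = ∑ j ∈ Finset.range p, F (j : ZMod p) := by
  have : NeZero p := ⟨(Fact.out : p.Prime).ne_zero⟩
  refine Finset.sum_nbij' (fun a => a.val) (fun j => (j : ZMod p)) ?_ ?_ ?_ ?_ ?_
  · intro a _; simp [ZMod.val_lt]
  · intro j _; simp
  · intro a _; simp
  · intro j hj; exact ZMod.val_cast_of_lt (Finset.mem_range.1 hj)
  · intro a _; simp

lemma g_fac (p : ℕ) (k : ℕ) :
    1 - Complex.exp (2 * Real.pi * Complex.I / p) ^ k =
      (-Complex.I) * ((2 * Real.sin (Real.pi * k / p) : ℝ) : ℂ) * Complex.exp (Real.pi * Complex.I / p) ^ k := by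
  rw [← Complex.exp_nat_mul, ← Complex.exp_nat_mul]
  push_cast
  rw [Complex.sin]
  set y := Complex.exp (k * (Real.pi * Complex.I / p)) with hy
  have h1 : Complex.exp (k * (2 * Real.pi * Complex.I / p)) = y * y := by
    rw [hy, ← Complex.exp_add]; ring_nf
  have h2 : Complex.exp (Real.pi * k / p * Complex.I) = y := by rw [hy]; ring_nf
  have h3 : Complex.exp (-(Real.pi * k / p) * Complex.I) = y⁻¹ := by
    rw [hy, ← Complex.exp_neg]; ring_nf
  have h4 : y ≠ 0 := Complex.exp_ne_zero _
  rw [h1, h2, h3]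
  have := Complex.I_mul_I
  field_simp
  linear_combination (1 - y ^ 2) * this

lemma g_prod (p m : ℕ) (hm : p = 2 * m + 1) (N : ℕ) (hN : N = ∑ k ∈ Finset.range m, (k + 1)) :
    Complex.exp (2 * Real.pi * Complex.I / p) ^ (N * m) *
      ∏ k ∈ Finset.range m, (1 - Complex.exp (2 * Real.pi * Complex.I / p) ^ (k + 1)) =
    (-Complex.I) ^ m * (-1) ^ N *
      ((∏ k ∈ Finset.range m, (2 * Real.sin (Real.pi * (k + 1 : ℕ) / p)) : ℝ) : ℂ) := by
  have h0 : ∏ k ∈ Finset.range m, (1 - Complex.exp (2 * Real.pi * Complex.I / p) ^ (k + 1)) =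
      (-Complex.I) ^ m *
      ((∏ k ∈ Finset.range m, (2 * Real.sin (Real.pi * (k + 1 : ℕ) / p)) : ℝ) : ℂ) *
      Complex.exp (Real.pi * Complex.I / p) ^ N := by
    rw [Finset.prod_congr rfl fun k _ => g_fac p (k + 1), Finset.prod_mul_distrib, Finset.prod_mul_distrib,
      Finset.prod_pow_eq_pow_sum, ← hN, Complex.ofReal_prod, Finset.prod_const, Finset.card_range]
  rw [h0]
  have hp0 : (p : ℂ) ≠ 0 := by exact_mod_cast (by omega : p ≠ 0)
  have h1 : Complex.exp (2 * Real.pi * Complex.I / p) ^ (N * m) * Complex.exp (Real.pi * Complex.I / p) ^ N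
      = (-1) ^ N := by
    rw [← Complex.exp_pi_mul_I, ← Complex.exp_nat_mul, ← Complex.exp_nat_mul, ← Complex.exp_nat_mul,
      ← Complex.exp_add]
    congr 1
    have : (p : ℂ) = 2 * m + 1 := by exact_mod_cast hm
    field_simp
    rw [this]; push_cast; ring
  rw [← h1]
  ring

lemma g_sinpos (p k : ℕ) (hk : 0 < k) (hkp : k < p) : 0 < Real.sin (Real.pi * k / p) := by
  have hp : (0 : ℝ) < p := by exact_mod_cast (by omega : 0 < p)
  have hk' : (0 : ℝ) < k := by exact_mod_cast hk
  have hkp' : (k : ℝ) < p := by exact_mod_cast hkp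
  apply Real.sin_pos_of_pos_of_lt_pi
  · have := Real.pi_pos
    positivity
  · rw [div_lt_iff₀ hp]
    exact mul_lt_mul_of_pos_left hkp' Real.pi_pos

lemma g_Rsq (p m : ℕ) (hm : p = 2 * m + 1) :
    (∏ k ∈ Finset.range m, (2 * Real.sin (Real.pi * (k + 1 : ℕ) / p))) ^ 2 = p := by
  have hp0 : (p : ℝ) ≠ 0 := by exact_mod_cast (by omega : p ≠ 0)
  have hζ : IsPrimitiveRoot (Complex.exp (2 * Real.pi * Complex.I / p)) (2 * m + 1) := by
    have := Complex.isPrimitiveRoot_exp p (by omega)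
    rwa [← hm]
  have h1 := congrArg norm hζ.prod_one_sub_pow_eq_order
  rw [norm_prod] at h1
  have h2 : ∀ k ∈ Finset.range (2 * m), ‖1 - Complex.exp (2 * Real.pi * Complex.I / p) ^ (k + 1)‖ =
      2 * Real.sin (Real.pi * (k + 1 : ℕ) / p) := by
    intro k hk
    have hk := Finset.mem_range.1 hk
    have hpos := g_sinpos p (k + 1) (by omega) (by omega)
    rw [g_fac, norm_mul, norm_mul, norm_pow, Complex.norm_real]
    have : ‖Complex.exp (Real.pi * Complex.I / p)‖ = 1 := by
      rw [show (Real.pi * Complex.I / p : ℂ) = ((Real.pi / p : ℝ) : ℂ) * Complex.I by push_cast; ring]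
      exact Complex.norm_exp_ofReal_mul_I _
    rw [this]
    simp only [norm_neg, Complex.norm_I, one_mul, one_pow, mul_one, Real.norm_eq_abs]
    rw [abs_of_pos (by positivity)]
  rw [Finset.prod_congr rfl h2, two_mul, Finset.prod_range_add] at h1
  rw [← Finset.prod_range_reflect (fun k => 2 * Real.sin (Real.pi * (m + k + 1 : ℕ) / p))] at h1
  have h3 : ∏ j ∈ Finset.range m, (2 * Real.sin (Real.pi * (m + (m - 1 - j) + 1 : ℕ) / p))
      = ∏ k ∈ Finset.range m, (2 * Real.sin (Real.pi * (k + 1 : ℕ) / p)) := by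
    apply Finset.prod_congr rfl
    intro j hj
    have hj := Finset.mem_range.1 hj
    rw [← Real.sin_pi_sub]
    congr 2
    have : ((m + (m - 1 - j) + 1 : ℕ) : ℝ) = p - (j + 1 : ℕ) := by
      rw [eq_sub_iff_add_eq]; exact_mod_cast (by omega)
    rw [this]; field_simp; ring
  rw [h3, ← sq] at h1
  rw [h1]
  rw [hm]
  push_cast
  norm_cast
  omega

/-- Sign of the quadratic Gauss sum. -/
lemma g_sign (p : ℕ) [Fact p.Prime] (hp2 : p ≠ 2) :
    ∃ R : ℝ, 0 < R ∧
    ∑ a : ZMod p, ((quadraticChar (ZMod p) a : ℤ) : ℂ) * ZMod.stdAddChar a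
      = if p % 4 = 1 then (R : ℂ) else Complex.I * R := by
  have hp : p.Prime := Fact.out
  have : NeZero p := ⟨hp.ne_zero⟩
  obtain ⟨m, hm⟩ : ∃ m, p = 2 * m + 1 := hp.odd_of_ne_two hp2
  have hm2 : p / 2 = m := by omega
  set ζ := Complex.exp (2 * Real.pi * Complex.I / p) with hζdef
  have hζ : IsPrimitiveRoot ζ p := Complex.isPrimitiveRoot_exp p hp.ne_zero
  set R := ∏ k ∈ Finset.range m, (2 * Real.sin (Real.pi * (k + 1 : ℕ) / p)) with hR
  set N := ∑ k ∈ Finset.range m, (k + 1) with hN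
  have hRpos : 0 < R := by
    apply Finset.prod_pos
    intro k hk
    have hk := Finset.mem_range.1 hk
    have := g_sinpos p (k + 1) (by omega) (by omega)
    positivity
  have hR2 : R ^ 2 = p := g_Rsq p m hm
  have hP := g_prod p m hm N hN
  rw [← hζdef, ← hR] at hP
  set χ : MulChar (ZMod p) ℂ := (quadraticChar (ZMod p)).ringHomComp (Int.castRingHom ℂ) with hχ
  have hchar : ringChar (ZMod p) ≠ 2 := by rwa [ZMod.ringChar_zmod_n]
  have hτ : gaussSum χ ZMod.stdAddChar ^ 2 = χ (-1) * Fintype.card (ZMod p) := by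
    apply gaussSum_sq
    · rw [hχ]
      exact (MulChar.ringHomComp_ne_one_iff (Int.cast_injective)).2 (quadraticChar_ne_one hchar)
    · exact (quadraticChar_isQuadratic (ZMod p)).comp _
    · exact ZMod.isPrimitive_stdAddChar p
  have hτ' : gaussSum χ ZMod.stdAddChar = ∑ j ∈ Finset.range p, ((legendreSym p j : ℤ) : ℂ) * ζ ^ j := by
    rw [gaussSum, g_sum]
    apply Finset.sum_congr rfl
    intro j _
    congr 1
    · simp [hχ, legendreSym]
    · have := ZMod.stdAddChar_coe (N := p) j
      rw [hζdef, ← Complex.exp_nat_mul]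
      push_cast at this
      rw [this]
      congr 1; ring
  have hχ1 : χ (-1) = (-1) ^ m := by
    simp only [hχ, MulChar.ringHomComp_apply]
    rw [quadraticChar_neg_one hchar, ZMod.card, ZMod.χ₄_eq_neg_one_pow (by omega), hm2]
    simp
  have hsq : gaussSum χ ZMod.stdAddChar ^ 2 = (ζ ^ (N * m) * ∏ k ∈ Finset.range m, (1 - ζ ^ (k + 1))) ^ 2 := by
    rw [hτ, hP, hχ1, ZMod.card, mul_pow, mul_pow, ← pow_mul, ← pow_mul, mul_comm m 2, mul_comm N 2, pow_mul,
      pow_mul]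
    have : (R : ℂ) ^ 2 = p := by exact_mod_cast hR2
    rw [this]; simp
  have hmain : gaussSum χ ZMod.stdAddChar = (-Complex.I) ^ m * (-1) ^ N * R := by
    rcases sq_eq_sq_iff_eq_or_eq_neg.1 hsq with h | h
    · rw [h, hP]
    · exfalso
      refine g3 p hp2 (fun j => legendreSym p j) (N * m) ?_ ζ hζ ?_
      · intro j
        simpa using legendreSym.eq_pow p (j : ℤ)
      · rw [hm2, ← h, hτ']
  refine ⟨R, hRpos, ?_⟩
  have hg : ∑ a : ZMod p, ((quadraticChar (ZMod p) a : ℤ) : ℂ) * ZMod.stdAddChar a =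
    gaussSum χ ZMod.stdAddChar := by simp [gaussSum, hχ]
  rw [hg, hmain]
  have hN2 : N * 2 = (m + 1) * m := by
    rw [hN, Finset.sum_add_distrib, add_mul, Finset.sum_range_id_mul_two]
    simp
    rcases m with _ | m
    · simp
    · simp; ring
  obtain ⟨q, hq⟩ : ∃ q, m = 4 * q + m % 4 := ⟨m / 4, by omega⟩
  have hI4 : (-Complex.I) ^ 4 = 1 := by
    rw [neg_pow, Complex.I_pow_four]; norm_num
  have hmr : m % 4 < 4 := Nat.mod_lt _ (by norm_num)
  have e1 : (-Complex.I) ^ m = (-Complex.I) ^ (m % 4) := by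
    conv_lhs => rw [hq, pow_add, pow_mul, hI4, one_pow, one_mul]
  have h2 : Complex.I ^ 2 = -1 := Complex.I_sq
  rw [e1]
  generalize m % 4 = t at *
  interval_cases t
  · rw [if_pos (by omega)]
    have : Even N := by
      refine ⟨(4 * q + 1) * q, ?_⟩
      have : N * 2 = ((4 * q + 1) * q + (4 * q + 1) * q) * 2 := by rw [hN2, hq]; ring
      omega
    rw [this.neg_one_pow]; simp
  · rw [if_neg (by omega)]
    have : Odd N := by
      refine ⟨(4 * q + 3) * q, ?_⟩
      have : N * 2 = (2 * ((4 * q + 3) * q) + 1) * 2 := by rw [hN2, hq]; ring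
      omega
    rw [this.neg_one_pow]; simp
  · rw [if_pos (by omega)]
    have : Odd N := by
      refine ⟨4 * q * q + 5 * q + 1, ?_⟩
      have : N * 2 = (2 * (4 * q * q + 5 * q + 1) + 1) * 2 := by rw [hN2, hq]; ring
      omega
    rw [this.neg_one_pow]; simp
  · rw [if_neg (by omega)]
    have : Even N := by
      refine ⟨4 * q * q + 7 * q + 3, ?_⟩
      have : N * 2 = (4 * q * q + 7 * q + 3 + (4 * q * q + 7 * q + 3)) * 2 := by rw [hN2, hq]; ring
      omega
    rw [this.neg_one_pow]
    linear_combination (-Complex.I * R) * h2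

section
open Filter Topology

lemma t_parts (e w : ℕ → ℝ) (N : ℕ) :
    ∑ k ∈ Finset.range N, e k * w k = (∑ k ∈ Finset.range N, e k) * w N +
      ∑ k ∈ Finset.range N, (∑ i ∈ Finset.range (k + 1), e i) * (w k - w (k + 1)) := by
  induction N with
  | zero => simp
  | succ N ih =>
    rw [Finset.sum_range_succ, ih, Finset.sum_range_succ (fun k => _ * (w k - w (k + 1))),
      Finset.sum_range_succ e N]
    ring

noncomputable def tw (s : ℝ) (k : ℕ) : ℝ := ((k : ℝ) + 1) ^ (-s)

lemma tw_bound (s : ℝ) (h1 : 1 ≤ s) (h2 : s ≤ 2) (k : ℕ) :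
    |tw s k - tw s (k + 1)| ≤ 2 * (1 / ((k : ℝ) + 1) ^ 2) := by
  have hk : (0 : ℝ) < k + 1 := by positivity
  have hk1 : (1 : ℝ) ≤ k + 1 := by linarith [(Nat.cast_nonneg k : (0 : ℝ) ≤ k)]
  unfold tw
  have hle : (((k + 1 : ℕ) : ℝ) + 1) ^ (-s) ≤ ((k : ℝ) + 1) ^ (-s) := by
    apply Real.rpow_le_rpow_of_nonpos hk
    · push_cast; linarith
    · linarith
  rw [abs_of_nonneg (by linarith)]
  set u := 1 / ((k : ℝ) + 1) with hu
  have hu0 : 0 < u := by positivity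
  have h3 : (((k + 1 : ℕ) : ℝ) + 1) = (k + 1) * (1 + u) := by
    rw [hu]; push_cast; field_simp
  rw [h3, Real.mul_rpow hk.le (by linarith)]
  have h4 : 1 + (-s) * u ≤ (1 + u) ^ (-s) :=
    by
      have h8 : Real.log (1 + u) ≤ u := by
        have := Real.log_le_sub_one_of_pos (by linarith : 0 < 1 + u)
        linarith
      rw [Real.rpow_def_of_pos (by linarith)]
      have h9 := Real.add_one_le_exp (Real.log (1 + u) * -s)
      nlinarith
  have h5 : ((k : ℝ) + 1) ^ (-s) ≤ u := by
    rw [hu, one_div, ← Real.rpow_neg_one]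
    exact Real.rpow_le_rpow_of_exponent_le hk1 (by linarith)
  have h6 : 0 ≤ ((k : ℝ) + 1) ^ (-s) := by positivity
  have h7 : 1 / ((k : ℝ) + 1) ^ 2 = u * u := by rw [hu]; field_simp
  rw [h7]
  calc _ = ((k : ℝ) + 1) ^ (-s) * (1 - (1 + u) ^ (-s)) := by ring
    _ ≤ ((k : ℝ) + 1) ^ (-s) * (s * u) := by
      apply mul_le_mul_of_nonneg_left _ h6; linarith
    _ ≤ u * (2 * u) := by gcongr
    _ = _ := by ring

lemma tw_tendsto (s : ℝ) (h1 : 1 ≤ s) : Tendsto (tw s) atTop (𝓝 0) := by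
  have : Tendsto (fun x : ℝ => x ^ (-s)) atTop (𝓝 0) := tendsto_rpow_neg_atTop (by linarith)
  have h2 : Tendsto (fun k : ℕ => (k : ℝ) + 1) atTop atTop :=
    tendsto_atTop_add_const_right _ _ tendsto_natCast_atTop_atTop
  exact this.comp h2

lemma t_main (e : ℕ → ℝ) (B : ℝ) (hB : ∀ N, |∑ k ∈ Finset.range N, e k| ≤ B)
    (hpos : ∀ s, 1 < s → ∃ A, 0 ≤ A ∧ HasSum (fun k => e k * tw s k) A) :
    ∃ L, 0 ≤ L ∧ Tendsto (fun N => ∑ k ∈ Finset.range N, e k * tw 1 k) atTop (𝓝 L) := by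
  have hB0 : 0 ≤ B := (abs_nonneg _).trans (hB 0)
  set T : ℝ → ℕ → ℝ := fun s k => (∑ i ∈ Finset.range (k + 1), e i) * (tw s k - tw s (k + 1)) with hT
  have hbs : Summable (fun k : ℕ => B * (2 * (1 / ((k : ℝ) + 1) ^ 2))) := by
    apply Summable.mul_left
    apply Summable.mul_left
    have := (summable_nat_add_iff 1).2 (Real.summable_one_div_nat_pow.2 (by norm_num : 1 < 2))
    exact_mod_cast this
  have hTb : ∀ s, 1 ≤ s → s ≤ 2 → ∀ k, ‖T s k‖ ≤ B * (2 * (1 / ((k : ℝ) + 1) ^ 2)) := by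
    intro s h1 h2 k
    rw [hT, Real.norm_eq_abs, abs_mul]
    exact mul_le_mul (hB _) (tw_bound s h1 h2 k) (abs_nonneg _) hB0
  have hpart : ∀ s, 1 ≤ s → s ≤ 2 →
      Tendsto (fun N => ∑ k ∈ Finset.range N, e k * tw s k) atTop (𝓝 (∑' k, T s k)) := by
    intro s h1 h2
    have hs : Summable (T s) := Summable.of_norm_bounded hbs (hTb s h1 h2)
    have h3 := hs.hasSum.tendsto_sum_nat
    have h4 : Tendsto (fun N => (∑ k ∈ Finset.range N, e k) * tw s N) atTop (𝓝 0) := by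
      apply squeeze_zero_norm (a := fun N => B * |tw s N|)
      · intro N
        rw [Real.norm_eq_abs, abs_mul]
        exact mul_le_mul_of_nonneg_right (hB N) (abs_nonneg _)
      · simpa using ((tw_tendsto s h1).abs.const_mul B)
    have h5 := h4.add h3
    rw [zero_add] at h5
    refine h5.congr ?_
    intro N
    rw [t_parts e (tw s) N]
  refine ⟨∑' k, T 1 k, ?_, hpart 1 le_rfl (by norm_num)⟩
  have hcont : Tendsto (fun s => ∑' k, T s k) (𝓝[>] 1) (𝓝 (∑' k, T 1 k)) := by
    apply tendsto_tsum_of_dominated_convergence hbs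
    · intro k
      have : Continuous (fun s => T s k) := by
        simp only [hT, tw]
        have hc : ∀ x : ℝ, 0 < x → Continuous (fun s : ℝ => x ^ (-s)) := by
          intro x hx
          exact (Real.continuous_const_rpow hx.ne').comp continuous_neg
        exact continuous_const.mul ((hc _ (by positivity)).sub (hc _ (by positivity)))
      exact (this.tendsto 1).mono_left nhdsWithin_le_nhds
    · have : Set.Ioc (1 : ℝ) 2 ∈ 𝓝[>] (1 : ℝ) := Ioc_mem_nhdsGT (by norm_num)
      filter_upwards [this] with s hs k
      exact hTb s hs.1.le hs.2 k
  apply ge_of_tendsto hcont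
  have : Set.Ioc (1 : ℝ) 2 ∈ 𝓝[>] (1 : ℝ) := Ioc_mem_nhdsGT (by norm_num)
  filter_upwards [this] with s hs
  obtain ⟨A, hA, hA2⟩ := hpos s hs.1
  rw [tendsto_nhds_unique (hpart s hs.1.le hs.2) hA2.tendsto_sum_nat]
  exact hA

lemma t_euler (f : ℕ →*₀ ℝ) (hf : ∀ n, |f n| ≤ 1) (s : ℝ) (hs : 1 < s) :
    ∃ A, 0 ≤ A ∧ HasSum (fun k => f (k + 1) * tw s k) A := by
  let g : ℕ →*₀ ℝ :=
    { toFun := fun n => f n * (n : ℝ) ^ (-s)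
      map_zero' := by simp
      map_one' := by simp
      map_mul' := by
        intro a b
        rw [map_mul, Nat.cast_mul, Real.mul_rpow (by positivity) (by positivity)]; ring }
  have hg : ∀ n, g n = f n * (n : ℝ) ^ (-s) := fun n => rfl
  have hle : ∀ n, ‖g n‖ ≤ (n : ℝ) ^ (-s) := by
    intro n
    have h0 : 0 ≤ (n : ℝ) ^ (-s) := by positivity
    rw [hg, Real.norm_eq_abs, abs_mul, abs_of_nonneg h0]
    exact mul_le_of_le_one_left h0 (hf n)
  have hsum : Summable (fun n => ‖g n‖) :=
    Summable.of_nonneg_of_le (fun n => norm_nonneg _) hle (Real.summable_nat_rpow.2 (by linarith))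
  have hE := EulerProduct.eulerProduct_completely_multiplicative_hasProd hsum
  refine ⟨∑' n, g n, ?_, ?_⟩
  · refine ge_of_tendsto hE (Eventually.of_forall fun S => ?_)
    apply Finset.prod_nonneg
    intro q _
    rw [inv_nonneg, sub_nonneg]
    refine (le_abs_self _).trans ((hle q).trans ?_)
    apply Real.rpow_le_one_of_one_le_of_nonpos
    · exact_mod_cast q.2.one_lt.le
    · linarith
  · have h1 := hsum.of_norm.hasSum
    have h2 := (hasSum_nat_add_iff' 1).2 h1
    simp only [Finset.range_one, Finset.sum_singleton, map_zero, sub_zero] at h2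
    refine h2.congr_fun ?_
    intro k
    rw [hg, tw]; push_cast; rfl

lemma t_arg (x : ℝ) (h0 : 0 < x) (h1 : x < 1) :
    1 - Complex.exp (2 * Real.pi * x * Complex.I) ∈ Complex.slitPlane ∧
    (Complex.log (1 - Complex.exp (2 * Real.pi * x * Complex.I))).im = Real.pi * (x - 1 / 2) := by
  have hpi := Real.pi_pos
  have hs : 0 < 2 * Real.sin (Real.pi * x) := by
    have : 0 < Real.sin (Real.pi * x) := by
      apply Real.sin_pos_of_pos_of_lt_pi (by positivity)
      nlinarith
    positivity
  have key : 1 - Complex.exp (2 * Real.pi * x * Complex.I) =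
      ((2 * Real.sin (Real.pi * x) : ℝ) : ℂ) * Complex.exp ((Real.pi * (x - 1 / 2) : ℝ) * Complex.I) := by
    push_cast
    rw [Complex.sin]
    rw [show (Real.pi * (x - 1 / 2) * Complex.I : ℂ) = Real.pi * x * Complex.I + -(Real.pi / 2 * Complex.I) by ring,
      Complex.exp_add, Complex.exp_neg (Real.pi / 2 * Complex.I), Complex.exp_pi_div_two_mul_I,
      show (-(Real.pi * x) * Complex.I : ℂ) = -(Real.pi * x * Complex.I) by ring, Complex.exp_neg,
      show (2 * Real.pi * x * Complex.I : ℂ) = Real.pi * x * Complex.I + Real.pi * x * Complex.I by ring,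
      Complex.exp_add]
    have := Complex.exp_ne_zero (Real.pi * x * Complex.I)
    have h4 := Complex.I_ne_zero
    field_simp
  have harg : (1 - Complex.exp (2 * Real.pi * x * Complex.I)).arg = Real.pi * (x - 1 / 2) := by
    rw [key, Complex.arg_real_mul _ hs, Complex.arg_exp_mul_I, toIocMod_eq_self]
    constructor <;> nlinarith
  refine ⟨?_, by rw [Complex.log_im, harg]⟩
  rw [Complex.mem_slitPlane_iff_arg, harg]
  constructor
  · nlinarith
  · rw [key]
    exact mul_ne_zero (by exact_mod_cast hs.ne') (Complex.exp_ne_zero _)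

lemma t_hasSum (x r : ℝ) (hr : 0 ≤ r) (hr1 : r < 1) :
    HasSum (fun n : ℕ => Real.sin (2 * Real.pi * n * x) / n * r ^ n)
      (-(Complex.log (1 - r * Complex.exp (2 * Real.pi * x * Complex.I))).im) := by
  have hn : ‖(r * Complex.exp (2 * Real.pi * x * Complex.I) : ℂ)‖ < 1 := by
    rw [norm_mul, Complex.norm_real, show (2 * Real.pi * x * Complex.I : ℂ) = ((2 * Real.pi * x : ℝ) : ℂ) * Complex.I by
      push_cast; ring, Complex.norm_exp_ofReal_mul_I, mul_one, Real.norm_eq_abs, abs_of_nonneg hr]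
    exact hr1
  have := Complex.hasSum_im (Complex.hasSum_taylorSeries_neg_log hn)
  rw [Complex.neg_im] at this
  refine this.congr_fun ?_
  intro n
  rw [mul_pow, ← Complex.exp_nat_mul,
    show (n * (2 * Real.pi * x * Complex.I) : ℂ) = ((2 * Real.pi * n * x : ℝ) : ℂ) * Complex.I by
      push_cast; ring]
  rw [show ((r : ℂ) ^ n * Complex.exp (((2 * Real.pi * n * x : ℝ) : ℂ) * Complex.I) / n) =
    ((r ^ n / n : ℝ) : ℂ) * Complex.exp (((2 * Real.pi * n * x : ℝ) : ℂ) * Complex.I) by push_cast; ring]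
  rw [Complex.im_ofReal_mul, Complex.exp_ofReal_mul_I_im]
  ring

lemma t_bdd (x : ℝ) (h0 : 0 < x) (h1 : x < 1) :
    ∃ B, ∀ N, |∑ k ∈ Finset.range N, Real.sin (2 * Real.pi * (k + 1 : ℕ) * x)| ≤ B := by
  set z := Complex.exp (2 * Real.pi * x * Complex.I) with hz
  have hz1 : z - 1 ≠ 0 := by
    have := Complex.slitPlane_ne_zero (t_arg x h0 h1).1
    intro h
    apply this
    rw [← hz]; linear_combination -h
  have hzn : ‖z‖ = 1 := by
    rw [hz, show (2 * Real.pi * x * Complex.I : ℂ) = ((2 * Real.pi * x : ℝ) : ℂ) * Complex.I by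
      push_cast; ring, Complex.norm_exp_ofReal_mul_I]
  refine ⟨2 / ‖z - 1‖, fun N => ?_⟩
  have h2 : ∑ k ∈ Finset.range N, Real.sin (2 * Real.pi * (k + 1 : ℕ) * x) =
      (z * ∑ k ∈ Finset.range N, z ^ k).im := by
    rw [Finset.mul_sum, Complex.im_sum]
    apply Finset.sum_congr rfl
    intro k _
    rw [← pow_succ', hz, ← Complex.exp_nat_mul,
      show ((k + 1 : ℕ) * (2 * Real.pi * x * Complex.I) : ℂ) = ((2 * Real.pi * (k + 1 : ℕ) * x : ℝ) : ℂ) * Complex.I by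
      push_cast; ring, Complex.exp_ofReal_mul_I_im]
  rw [h2]
  refine (Complex.abs_im_le_norm _).trans ?_
  rw [norm_mul, hzn, one_mul, geom_sum_eq (sub_ne_zero.1 hz1), norm_div]
  gcongr
  refine (norm_sub_le _ _).trans ?_
  rw [norm_pow, hzn]; norm_num

lemma t_AN {ι : Type*} (S : Finset ι) (c x : ι → ℝ) (h0 : ∀ i ∈ S, 0 < x i) (h1 : ∀ i ∈ S, x i < 1)
    (f : ℕ →*₀ ℝ) (hf : ∀ n, |f n| ≤ 1) (G : ℝ) (hG : 0 < G)
    (h : ∀ m : ℕ, ∑ i ∈ S, c i * Real.sin (2 * Real.pi * m * x i) = G * f m) :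
    0 ≤ ∑ i ∈ S, c i * (1 / 2 - x i) := by
  set e : ℕ → ℝ := fun k => G * f (k + 1) with he
  have hB : ∃ B, ∀ N, |∑ k ∈ Finset.range N, e k| ≤ B := by
    choose! B hB using fun i (hi : i ∈ S) => t_bdd (x i) (h0 i hi) (h1 i hi)
    refine ⟨∑ i ∈ S, |c i| * B i, fun N => ?_⟩
    have : ∑ k ∈ Finset.range N, e k =
        ∑ i ∈ S, c i * ∑ k ∈ Finset.range N, Real.sin (2 * Real.pi * (k + 1 : ℕ) * x i) := by
      simp_rw [Finset.mul_sum]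
      rw [Finset.sum_comm]
      apply Finset.sum_congr rfl
      intro k _
      exact (h (k + 1)).symm
    rw [this]
    refine (Finset.abs_sum_le_sum_abs _ _).trans (Finset.sum_le_sum fun i hi => ?_)
    rw [abs_mul]
    exact mul_le_mul_of_nonneg_left (hB i hi N) (abs_nonneg _)
  obtain ⟨B, hB⟩ := hB
  obtain ⟨L, hL, hLt⟩ := t_main e B hB (by
    intro s hs
    obtain ⟨A, hA, hA2⟩ := t_euler f hf s hs
    refine ⟨G * A, by positivity, ?_⟩
    simpa [he, mul_assoc] using hA2.mul_left G)
  set a : ℕ → ℝ := fun n => G * f n / n with ha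
  have hat : Tendsto (fun N => ∑ n ∈ Finset.range N, a n) atTop (𝓝 L) := by
    rw [← tendsto_add_atTop_iff_nat 1]
    refine hLt.congr ?_
    intro N
    rw [Finset.sum_range_succ']
    simp [ha, he, tw, Real.rpow_neg_one, div_eq_mul_inv]
  have habel := Real.tendsto_tsum_powerSeries_nhdsWithin_lt hat
  have hlim : Tendsto (fun r : ℝ => ∑ i ∈ S, c i *
      (-(Complex.log (1 - r * Complex.exp (2 * Real.pi * x i * Complex.I))).im)) (𝓝[<] 1)
      (𝓝 (∑ i ∈ S, c i * (Real.pi * (1 / 2 - x i)))) := by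
    apply tendsto_finsetSum
    intro i hi
    apply Tendsto.const_mul
    obtain ⟨hsl, him⟩ := t_arg (x i) (h0 i hi) (h1 i hi)
    have hc : ContinuousAt (fun r : ℝ =>
        -(Complex.log (1 - r * Complex.exp (2 * Real.pi * x i * Complex.I))).im) 1 := by
      apply ContinuousAt.neg
      apply Complex.continuous_im.continuousAt.comp
      apply ContinuousAt.clog
      · fun_prop
      · simpa using hsl
    have := hc.tendsto
    simp only [Complex.ofReal_one, one_mul, him] at this
    rw [show Real.pi * (1 / 2 - x i) = -(Real.pi * (x i - 1 / 2)) by ring]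
    exact this.mono_left nhdsWithin_le_nhds
  have heq : (fun r : ℝ => ∑' n, a n * r ^ n) =ᶠ[𝓝[<] 1] (fun r : ℝ => ∑ i ∈ S, c i *
      (-(Complex.log (1 - r * Complex.exp (2 * Real.pi * x i * Complex.I))).im)) := by
    have : Set.Ioo (0 : ℝ) 1 ∈ 𝓝[<] (1 : ℝ) := Ioo_mem_nhdsLT (by norm_num)
    filter_upwards [this] with r hr
    have h5 := hasSum_sum (s := S) (fun i _ => (t_hasSum (x i) r hr.1.le hr.2).mul_left (c i))
    rw [← h5.tsum_eq]
    congr 1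
    ext n
    rw [ha]
    simp only
    rw [← h n, Finset.sum_div, Finset.sum_mul]
    apply Finset.sum_congr rfl
    intro i _
    ring
  have := tendsto_nhds_unique (habel.congr' heq) hlim
  rw [this] at hL
  have h7 : ∑ i ∈ S, c i * (Real.pi * (1 / 2 - x i)) = Real.pi * ∑ i ∈ S, c i * (1 / 2 - x i) := by
    rw [Finset.mul_sum]
    apply Finset.sum_congr rfl
    intro i _
    ring
  rw [h7] at hL
  exact nonneg_of_mul_nonneg_right hL Real.pi_pos

end


lemma c_shift (p : ℕ) [Fact p.Prime] (hp2 : p ≠ 2) (b : ZMod p) :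
    ∑ a : ZMod p, ((quadraticChar (ZMod p) a : ℤ) : ℂ) * ZMod.stdAddChar (b * a) =
    ((quadraticChar (ZMod p) b : ℤ) : ℂ) *
      ∑ a : ZMod p, ((quadraticChar (ZMod p) a : ℤ) : ℂ) * ZMod.stdAddChar a := by
  by_cases hb : b = 0
  · have hchar : ringChar (ZMod p) ≠ 2 := by rwa [ZMod.ringChar_zmod_n]
    have := quadraticChar_sum_zero hchar
    subst hb
    have hq0 : quadraticChar (ZMod p) 0 = 0 := quadraticChar_zero
    simp only [zero_mul, AddChar.map_zero_eq_one, mul_one, hq0, Int.cast_zero]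
    exact_mod_cast this
  · rw [Finset.mul_sum]
    refine Fintype.sum_bijective (fun a => b * a) (mulLeft_bijective₀ b hb) _ _ ?_
    intro a
    have h := quadraticChar_sq_one hb
    have hm : quadraticChar (ZMod p) (b * a) = quadraticChar (ZMod p) b * quadraticChar (ZMod p) a :=
      map_mul _ _ _
    have h' : ((quadraticChar (ZMod p) b : ℤ) : ℂ) ^ 2 = 1 := by exact_mod_cast h
    beta_reduce
    rw [hm, Int.cast_mul]
    linear_combination
      (-(((quadraticChar (ZMod p) a : ℤ) : ℂ) * ZMod.stdAddChar (b * a))) * h'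

lemma c_exp (p : ℕ) [Fact p.Prime] (m : ℕ) (a : ZMod p) :
    ZMod.stdAddChar ((m : ZMod p) * a) =
      Complex.exp (((2 * Real.pi * m * (a.val / p) : ℝ) : ℂ) * Complex.I) := by
  have : NeZero p := ⟨(Fact.out : p.Prime).ne_zero⟩
  have h := ZMod.stdAddChar_coe (N := p) ((m * a.val : ℕ) : ℤ)
  push_cast at h
  rw [ZMod.natCast_zmod_val] at h
  rw [h]
  congr 1
  push_cast
  ring

lemma c_re (p : ℕ) [Fact p.Prime] (m : ℕ) :
    (∑ a : ZMod p, ((quadraticChar (ZMod p) a : ℤ) : ℂ) * ZMod.stdAddChar ((m : ZMod p) * a)).re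
      = ∑ a : ZMod p, ((quadraticChar (ZMod p) a : ℤ) : ℝ) * Real.cos (2 * Real.pi * m * (a.val / p)) := by
  rw [Complex.re_sum]
  apply Finset.sum_congr rfl
  intro a _
  rw [c_exp, ← Complex.ofReal_intCast, Complex.re_ofReal_mul, Complex.exp_ofReal_mul_I_re]

lemma c_im (p : ℕ) [Fact p.Prime] (m : ℕ) :
    (∑ a : ZMod p, ((quadraticChar (ZMod p) a : ℤ) : ℂ) * ZMod.stdAddChar ((m : ZMod p) * a)).im
      = ∑ a : ZMod p, ((quadraticChar (ZMod p) a : ℤ) : ℝ) * Real.sin (2 * Real.pi * m * (a.val / p)) := by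
  rw [Complex.im_sum]
  apply Finset.sum_congr rfl
  intro a _
  rw [c_exp, ← Complex.ofReal_intCast, Complex.im_ofReal_mul, Complex.exp_ofReal_mul_I_im]

/-- The quadratic character as a real-valued function on the naturals. -/
noncomputable def cq (p : ℕ) [Fact p.Prime] : ℕ →*₀ ℝ where
  toFun n := ((quadraticChar (ZMod p) (n : ZMod p) : ℤ) : ℝ)
  map_zero' := by simp
  map_one' := by simp
  map_mul' := by
    intro a b
    rw [Nat.cast_mul, map_mul, Int.cast_mul]

lemma cq_abs (p : ℕ) [Fact p.Prime] (n : ℕ) : |cq p n| ≤ 1 := by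
  change |((quadraticChar (ZMod p) (n : ZMod p) : ℤ) : ℝ)| ≤ 1
  rcases quadraticChar_isQuadratic (ZMod p) (n : ZMod p) with h | h | h <;> simp [h]

/-- The quadratic character times the character modulo four. -/
noncomputable def cq4 (p : ℕ) [Fact p.Prime] : ℕ →*₀ ℝ where
  toFun n := ((quadraticChar (ZMod p) (n : ZMod p) : ℤ) : ℝ) * ((ZMod.χ₄ (n : ZMod 4) : ℤ) : ℝ)
  map_zero' := by simp
  map_one' := by simp
  map_mul' := by
    intro a b
    rw [Nat.cast_mul, Nat.cast_mul, map_mul, map_mul, Int.cast_mul, Int.cast_mul]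
    ring

lemma cq4_abs (p : ℕ) [Fact p.Prime] (n : ℕ) : |cq4 p n| ≤ 1 := by
  change |((quadraticChar (ZMod p) (n : ZMod p) : ℤ) : ℝ) * ((ZMod.χ₄ (n : ZMod 4) : ℤ) : ℝ)| ≤ 1
  rcases quadraticChar_isQuadratic (ZMod p) (n : ZMod p) with h | h | h <;>
  rcases ZMod.isQuadratic_χ₄ (n : ZMod 4) with h' | h' | h' <;> simp [h, h']

lemma c_sin4 (m : ℕ) : Real.sin (Real.pi / 2 * m) = ((ZMod.χ₄ (m : ZMod 4) : ℤ) : ℝ) := by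
  have hd := Nat.div_add_mod m 4
  have hr : m % 4 < 4 := Nat.mod_lt _ (by norm_num)
  rw [ZMod.χ₄_nat_mod_four]
  have : Real.sin (Real.pi / 2 * m) = Real.sin (Real.pi / 2 * (m % 4 : ℕ)) := by
    conv_lhs => rw [← hd]
    push_cast
    rw [show Real.pi / 2 * (4 * ((m / 4 : ℕ) : ℝ) + ((m % 4 : ℕ) : ℝ)) =
      Real.pi / 2 * ((m % 4 : ℕ) : ℝ) + (m / 4 : ℕ) * (2 * Real.pi) by ring, Real.sin_add_nat_mul_two_pi]
  rw [this]
  generalize m % 4 = t at *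
  interval_cases t
  · simp
  · simp
  · rw [show Real.pi / 2 * (2 : ℕ) = Real.pi by push_cast; ring, Real.sin_pi]
    have : ZMod.χ₄ ((2 : ℕ) : ZMod 4) = 0 := by decide
    rw [this]; simp
  · rw [show Real.pi / 2 * (3 : ℕ) = Real.pi / 2 + Real.pi by push_cast; ring, Real.sin_add_pi, Real.sin_pi_div_two]
    have : ZMod.χ₄ ((3 : ℕ) : ZMod 4) = -1 := by decide
    rw [this]; simp

/-- The target sum. -/
lemma c_target (p : ℕ) [Fact p.Prime] :
    ∑ n ∈ Finset.Icc 1 (p / 4), legendreSym p (n : ℤ) =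
      ∑ a : ZMod p, quadraticChar (ZMod p) a * (if 4 * a.val < p then 1 else 0) := by
  have hp : p.Prime := Fact.out
  have hp1 := hp.one_lt
  rw [g_sum p (fun a => quadraticChar (ZMod p) a * (if 4 * a.val < p then 1 else 0))]
  have : ∀ j ∈ Finset.range p, quadraticChar (ZMod p) (j : ZMod p) * (if 4 * (j : ZMod p).val < p then 1 else 0)
      = if j ∈ Finset.Icc 1 (p / 4) then legendreSym p (j : ℤ) else 0 := by
    intro j hj
    have hj := Finset.mem_range.1 hj
    rw [ZMod.val_cast_of_lt hj]
    rcases Nat.eq_zero_or_pos j with rfl | h0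
    · simp
    · have h4 : ¬ 4 ∣ p := by
        intro h
        have := (Nat.prime_dvd_prime_iff_eq Nat.prime_two hp).1 (dvd_trans (by norm_num) h)
        omega
      have : 4 * j < p ↔ j ∈ Finset.Icc 1 (p / 4) := by
        rw [Finset.mem_Icc]; omega
      simp only [this]
      split_ifs <;> simp [legendreSym]
  rw [Finset.sum_congr rfl this, ← Finset.sum_filter]
  apply Finset.sum_congr _ (fun _ _ => rfl)
  ext j
  simp only [Finset.mem_filter, Finset.mem_range, Finset.mem_Icc]
  omega

lemma c_neg (p : ℕ) [Fact p.Prime] (F : ZMod p → ℤ) :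
    ∑ a : ZMod p, quadraticChar (ZMod p) a * F a =
      quadraticChar (ZMod p) (-1) * ∑ a : ZMod p, quadraticChar (ZMod p) a * F (-a) := by
  rw [Finset.mul_sum]
  refine Fintype.sum_equiv (Equiv.neg _) _ _ ?_
  intro a
  rw [Equiv.neg_apply, neg_neg, ← mul_assoc, ← map_mul]
  simp

lemma c_val_neg (p : ℕ) [Fact p.Prime] (a : ZMod p) (ha : a ≠ 0) : ((-a).val : ℤ) = p - a.val := by
  have : NeZero p := ⟨(Fact.out : p.Prime).ne_zero⟩
  rw [ZMod.neg_val, if_neg ha]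
  have := ZMod.val_lt a
  omega

lemma c_congr (p : ℕ) [Fact p.Prime] (F F' : ZMod p → ℤ) (h : ∀ a, a ≠ 0 → F a = F' a) :
    ∑ a : ZMod p, quadraticChar (ZMod p) a * F a = ∑ a : ZMod p, quadraticChar (ZMod p) a * F' a := by
  apply Finset.sum_congr rfl
  intro a _
  by_cases ha : a = 0
  · simp [ha]
  · rw [h a ha]

lemma c_top (p : ℕ) [Fact p.Prime] (hp2 : p ≠ 2) :
    ∑ a : ZMod p, quadraticChar (ZMod p) a * (if 4 * a.val < 3 * p then 0 else 1) =
      quadraticChar (ZMod p) (-1) *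
      ∑ a : ZMod p, quadraticChar (ZMod p) a * (if 4 * a.val < p then 1 else 0) := by
  have hp : p.Prime := Fact.out
  have : NeZero p := ⟨hp.ne_zero⟩
  obtain ⟨k, hk⟩ := hp.odd_of_ne_two hp2
  rw [c_neg]
  congr 1
  apply c_congr
  intro a ha
  have h1 := c_val_neg p a ha
  have h2 := ZMod.val_lt a
  split_ifs <;> omega

lemma c_case1 (p : ℕ) [Fact p.Prime] (hp2 : p ≠ 2) (h4 : p % 4 = 1) :
    0 ≤ ∑ n ∈ Finset.Icc 1 (p / 4), legendreSym p (n : ℤ) := by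
  have hp : p.Prime := Fact.out
  have : NeZero p := ⟨hp.ne_zero⟩
  have hchar : ringChar (ZMod p) ≠ 2 := by rwa [ZMod.ringChar_zmod_n]
  have hppos : (0 : ℝ) < p := by exact_mod_cast hp.pos
  obtain ⟨R, hR, hRe⟩ := g_sign p hp2
  rw [if_pos h4] at hRe
  have hcos : ∀ m : ℕ, ∑ a : ZMod p, ((quadraticChar (ZMod p) a : ℤ) : ℝ) *
      Real.cos (2 * Real.pi * m * (a.val / p)) = ((quadraticChar (ZMod p) (m : ZMod p) : ℤ) : ℝ) * R := by
    intro m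
    rw [← c_re, c_shift p hp2, hRe, ← Complex.ofReal_intCast, ← Complex.ofReal_mul, Complex.ofReal_re]
  have hsin : ∀ m : ℕ, ∑ a : ZMod p, ((quadraticChar (ZMod p) a : ℤ) : ℝ) *
      Real.sin (2 * Real.pi * m * (a.val / p)) = 0 := by
    intro m
    rw [← c_im, c_shift p hp2, hRe, ← Complex.ofReal_intCast, ← Complex.ofReal_mul, Complex.ofReal_im]
  have hneg1 : quadraticChar (ZMod p) (-1) = 1 := by
    rw [quadraticChar_neg_one hchar, ZMod.card, ZMod.χ₄_nat_one_mod_four h4]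
  have hsum0 := quadraticChar_sum_zero hchar
  have key := t_AN (Finset.univ : Finset (ZMod p)) (fun a => ((quadraticChar (ZMod p) a : ℤ) : ℝ))
    (fun a => (a.val : ℝ) / p + 1 / 4 - (if 4 * a.val < 3 * p then 0 else 1 : ℤ)) ?_ ?_ (cq4 p) (cq4_abs p) R hR ?_
  · have hW : ∑ a : ZMod p, quadraticChar (ZMod p) a * (a.val : ℤ) = 0 := by
      have h1 := c_neg p (fun a => (a.val : ℤ))
      rw [hneg1, one_mul, c_congr p (fun a => ((-a).val : ℤ)) (fun a => p - a.val) (c_val_neg p)] at h1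
      simp only [mul_sub, Finset.sum_sub_distrib] at h1
      rw [← Finset.sum_mul, hsum0] at h1
      linarith
    have hT := c_top p hp2
    rw [hneg1, one_mul, ← c_target] at hT
    rw [← hT]
    have h5 : (∑ a : ZMod p, ((quadraticChar (ZMod p) a : ℤ) : ℝ) * (1 / 2 - ((a.val : ℝ) / p + 1 / 4 -
        (if 4 * a.val < 3 * p then 0 else 1 : ℤ)))) =
        1 / 4 * ((∑ a : ZMod p, quadraticChar (ZMod p) a : ℤ) : ℝ)
        - 1 / p * ((∑ a : ZMod p, quadraticChar (ZMod p) a * (a.val : ℤ) : ℤ) : ℝ)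
        + ((∑ a : ZMod p, quadraticChar (ZMod p) a * (if 4 * a.val < 3 * p then 0 else 1) : ℤ) : ℝ) := by
      push_cast
      rw [Finset.mul_sum, Finset.mul_sum, ← Finset.sum_sub_distrib, ← Finset.sum_add_distrib]
      apply Finset.sum_congr rfl
      intro a _
      ring
    rw [h5, hsum0, hW] at key
    simp only [Int.cast_zero, mul_zero, sub_zero, zero_add] at key
    exact_mod_cast key
  · intro a _
    split_ifs with h
    · push_cast; have : (0 : ℝ) ≤ (a.val : ℝ) / p := by positivity
      linarith
    · have h2 : 3 * p < 4 * a.val := by omega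
      have h3 : (3 * p : ℝ) < 4 * a.val := by exact_mod_cast h2
      have : (3 / 4 : ℝ) < (a.val : ℝ) / p := by rw [lt_div_iff₀ hppos]; linarith
      push_cast; linarith
  · intro a _
    split_ifs with h
    · have h3 : (4 * a.val : ℝ) < 3 * p := by exact_mod_cast h
      have : (a.val : ℝ) / p < 3 / 4 := by rw [div_lt_iff₀ hppos]; linarith
      push_cast; linarith
    · have h3 : (a.val : ℝ) < p := by exact_mod_cast ZMod.val_lt a
      have : (a.val : ℝ) / p < 1 := by rw [div_lt_iff₀ hppos]; linarith
      push_cast; linarith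
  · intro m
    have h6 : ∀ a : ZMod p, Real.sin (2 * Real.pi * m *
        ((a.val : ℝ) / p + 1 / 4 - (if 4 * a.val < 3 * p then 0 else 1 : ℤ))) =
        Real.sin (2 * Real.pi * m * (a.val / p)) * Real.cos (Real.pi / 2 * m) +
        Real.cos (2 * Real.pi * m * (a.val / p)) * Real.sin (Real.pi / 2 * m) := by
      intro a
      rw [← Real.sin_add]
      generalize (if 4 * a.val < 3 * p then 0 else 1 : ℤ) = t
      rw [show 2 * Real.pi * m * ((a.val : ℝ) / p + 1 / 4 - t) =
        2 * Real.pi * m * (a.val / p) + Real.pi / 2 * m - ((m * t : ℤ) : ℝ) * (2 * Real.pi) by push_cast; ring]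
      exact Real.sin_sub_int_mul_two_pi _ _
    simp only [h6, mul_add, Finset.sum_add_distrib, ← mul_assoc, ← Finset.sum_mul]
    simp only [mul_assoc] at hsin hcos ⊢
    rw [hsin, hcos, c_sin4]
    change _ = R * (((quadraticChar (ZMod p) (m : ZMod p) : ℤ) : ℝ) * ((ZMod.χ₄ (m : ZMod 4) : ℤ) : ℝ))
    ring

lemma c_case3 (p : ℕ) [Fact p.Prime] (hp2 : p ≠ 2) (h4 : p % 4 = 3) :
    0 ≤ ∑ n ∈ Finset.Icc 1 (p / 4), legendreSym p (n : ℤ) := by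
  have hp : p.Prime := Fact.out
  have : NeZero p := ⟨hp.ne_zero⟩
  have hchar : ringChar (ZMod p) ≠ 2 := by rwa [ZMod.ringChar_zmod_n]
  have hppos : (0 : ℝ) < p := by exact_mod_cast hp.pos
  obtain ⟨R, hR, hRe⟩ := g_sign p hp2
  rw [if_neg (by omega)] at hRe
  have hsin : ∀ m : ℕ, ∑ a : ZMod p, ((quadraticChar (ZMod p) a : ℤ) : ℝ) *
      Real.sin (2 * Real.pi * m * (a.val / p)) = R * ((quadraticChar (ZMod p) (m : ZMod p) : ℤ) : ℝ) := by
    intro m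
    rw [← c_im, c_shift p hp2, hRe, ← Complex.ofReal_intCast, Complex.im_ofReal_mul]
    simp [mul_comm]
  have hneg1 : quadraticChar (ZMod p) (-1) = -1 := by
    rw [quadraticChar_neg_one hchar, ZMod.card, ZMod.χ₄_nat_three_mod_four h4]
  have hsum0 := quadraticChar_sum_zero hchar
  set W := ∑ a : ZMod p, quadraticChar (ZMod p) a * (a.val : ℤ) with hW
  have hWneg : W ≤ 0 := by
    have key := t_AN (Finset.univ.erase (0 : ZMod p)) (fun a => ((quadraticChar (ZMod p) a : ℤ) : ℝ))
      (fun a => (a.val : ℝ) / p) ?_ ?_ (cq p) (cq_abs p) R hR ?_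
    · rw [Finset.sum_erase _ (by simp)] at key
      have h5 : (∑ a : ZMod p, ((quadraticChar (ZMod p) a : ℤ) : ℝ) * (1 / 2 - (a.val : ℝ) / p)) =
          1 / 2 * ((∑ a : ZMod p, quadraticChar (ZMod p) a : ℤ) : ℝ) - 1 / p * (W : ℝ) := by
        rw [hW]
        push_cast
        rw [Finset.mul_sum, Finset.mul_sum, ← Finset.sum_sub_distrib]
        apply Finset.sum_congr rfl
        intro a _
        ring
      rw [h5, hsum0] at key
      simp only [Int.cast_zero, mul_zero, zero_sub] at key
      by_contra hcon
      have : (0 : ℝ) < W := by exact_mod_cast (not_le.1 hcon)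
      have : 0 < 1 / (p : ℝ) * W := by positivity
      linarith
    · intro a ha
      have : a.val ≠ 0 := by
        rw [Ne, ZMod.val_eq_zero]; exact Finset.ne_of_mem_erase ha
      have : (0 : ℝ) < a.val := by exact_mod_cast Nat.pos_of_ne_zero this
      positivity
    · intro a _
      have h3 : (a.val : ℝ) < p := by exact_mod_cast ZMod.val_lt a
      rw [div_lt_iff₀ hppos]; linarith
    · intro m
      rw [Finset.sum_erase _ (by simp)]
      exact hsin m
  have hmul : ∀ b : ZMod p, b ≠ 0 → ∑ a : ZMod p, quadraticChar (ZMod p) a * ((b * a).val : ℤ) =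
      quadraticChar (ZMod p) b * W := by
    intro b hb
    rw [hW, Finset.mul_sum]
    refine Fintype.sum_bijective (fun a => b * a) (mulLeft_bijective₀ b hb) _ _ ?_
    intro a
    have h := quadraticChar_sq_one hb
    rw [map_mul, ← mul_assoc, ← mul_assoc, ← sq, h, one_mul]
  have h20 : (2 : ZMod p) ≠ 0 := by
    have : ((2 : ℕ) : ZMod p) ≠ 0 := by
      rw [Ne, ZMod.natCast_eq_zero_iff]
      intro h
      have := (Nat.prime_dvd_prime_iff_eq hp Nat.prime_two).1 h
      omega
    exact_mod_cast this
  have h40 : (2 * 2 : ZMod p) ≠ 0 := mul_ne_zero h20 h20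
  have hm2 := hmul 2 h20
  have hm4 := hmul (2 * 2) h40
  have hq4 : quadraticChar (ZMod p) (2 * 2) = 1 := by
    rw [map_mul, ← sq, quadraticChar_sq_one h20]
  rw [hq4, one_mul] at hm4
  have hT := c_top p hp2
  rw [hneg1, ← c_target] at hT
  have hT' := c_target p
  have hpt : ∀ a : ZMod p, a ≠ 0 → (p : ℤ) * ((if 4 * a.val < p then 1 else 0) - (if 4 * a.val < 3 * p then 0 else 1))
      = p - 2 * a.val - ((2 * a).val : ℤ) + ((2 * 2 * a).val : ℤ) := by
    intro a ha
    have hv0 : a.val ≠ 0 := by rwa [Ne, ZMod.val_eq_zero]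
    have hv := ZMod.val_lt a
    have e2 : (2 * a).val = (2 * a.val) % p := by
      rw [← ZMod.val_natCast]; push_cast; simp
    have e4 : (2 * 2 * a).val = (4 * a.val) % p := by
      rw [← ZMod.val_natCast]; push_cast; simp; norm_num
    rw [e2, e4]
    generalize a.val = n at *
    have hr : ∀ x q : ℕ, q * p ≤ x → x < (q + 1) * p → ((x % p : ℕ) : ℤ) = x - q * p := by
      intro x q h1 h2
      obtain ⟨y, rfl⟩ := Nat.exists_eq_add_of_le h1
      have : y < p := by rw [add_mul] at h2; omega
      rw [Nat.mul_add_mod_self_right, Nat.mod_eq_of_lt this]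
      push_cast; ring
    by_cases c1 : 4 * n < p
    · rw [hr (2 * n) 0 (by omega) (by omega), hr (4 * n) 0 (by omega) (by omega), if_pos c1, if_pos (by omega)]
      push_cast; ring
    by_cases c2 : 2 * n < p
    · rw [hr (2 * n) 0 (by omega) (by omega), hr (4 * n) 1 (by omega) (by omega), if_neg c1, if_pos (by omega)]
      push_cast; ring
    by_cases c3 : 4 * n < 3 * p
    · rw [hr (2 * n) 1 (by omega) (by omega), hr (4 * n) 2 (by omega) (by omega), if_neg c1, if_pos (by omega)]
      push_cast; ring
    · rw [hr (2 * n) 1 (by omega) (by omega), hr (4 * n) 3 (by omega) (by omega), if_neg c1, if_neg (by omega)]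
      push_cast; ring
  have hfin := c_congr p _ _ hpt
  have e1 : ∑ a : ZMod p, quadraticChar (ZMod p) a * ((p : ℤ) * ((if 4 * a.val < p then 1 else 0) -
      (if 4 * a.val < 3 * p then 0 else 1))) = p *
      (∑ a : ZMod p, quadraticChar (ZMod p) a * (if 4 * a.val < p then 1 else 0)
      - ∑ a : ZMod p, quadraticChar (ZMod p) a * (if 4 * a.val < 3 * p then 0 else 1)) := by
    rw [← Finset.sum_sub_distrib, Finset.mul_sum]
    apply Finset.sum_congr rfl
    intro a _
    ring
  have e2 : ∑ a : ZMod p, quadraticChar (ZMod p) a *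
      ((p : ℤ) - 2 * a.val - ((2 * a).val : ℤ) + ((2 * 2 * a).val : ℤ)) =
      p * ∑ a : ZMod p, quadraticChar (ZMod p) a - 2 * W
      - ∑ a : ZMod p, quadraticChar (ZMod p) a * ((2 * a).val : ℤ)
      + ∑ a : ZMod p, quadraticChar (ZMod p) a * ((2 * 2 * a).val : ℤ) := by
    rw [hW, Finset.mul_sum, Finset.mul_sum, ← Finset.sum_sub_distrib, ← Finset.sum_sub_distrib,
      ← Finset.sum_add_distrib]
    apply Finset.sum_congr rfl
    intro a _
    ring
  rw [e1, e2, hT, ← hT', hm2, hm4, hsum0] at hfin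
  have hp0 : (0 : ℤ) < p := by exact_mod_cast hp.pos
  rcases quadraticChar_isQuadratic (ZMod p) 2 with h | h | h <;> rw [h] at hfin <;> nlinarith

/-- For every odd prime `p`, the sum `∑_{n=1}^{⌊p/4⌋} (n/p)` of Legendre
symbols is nonnegative. -/
theorem stmt_11 (p : ℕ) [Fact p.Prime] (hp : p ≠ 2) :
    0 ≤ ∑ n ∈ Finset.Icc 1 (p / 4), legendreSym p (n : ℤ) := by
  obtain ⟨k, hk⟩ := (Fact.out : p.Prime).odd_of_ne_two hp
  rcases (by omega : p % 4 = 1 ∨ p % 4 = 3) with h | h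
  · exact c_case1 p hp h
  · exact c_case3 p hp h
end
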